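/- There exists a constant C′ > 0, depending only on Ω, μ, δ₀, κ⁺, κ⁻ and φ (in particular independent of δ ∈ (0, δ₀)), with the following property: if u : cl(Ω) → ℝ is Lipschitz on Ω, continuous on cl(Ω) with u = φ on ∂Ω, and satisfies div(a∇u) = 0 weakly, i.e. ∫_Ω a(x) ⟨∇u(x), ∇ψ(x)⟩ dx = 0 for every smooth function ψ : ℝ² → ℝ with compact support contained in Ω (where ∇u denotes the almost-everywhere defined gradient of the Lipschitz function u), then ess sup_{x ∈ Ω} |∇u(x)| ≤ C′. -/

import Mathlib

open Set MeasureTheory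

/-- Partial derivative in direction `i` of a function on `ℝ²`. -/
noncomputable def pd (i : Fin 2) (f : EuclideanSpace ℝ (Fin 2) → ℝ)
    (x : EuclideanSpace ℝ (Fin 2)) : ℝ :=
  fderiv ℝ f x (EuclideanSpace.single i 1)

/-- The center `(0, -2-2δ)` of the lower disk `B⁻`. -/
noncomputable def ctr (δ : ℝ) : EuclideanSpace ℝ (Fin 2) :=
  (WithLp.equiv 2 (Fin 2 → ℝ)).symm ![0, -2 - 2 * δ]

/-- The upper unit disk `B⁺`, centered at the origin. -/
noncomputable def Bp : Set (EuclideanSpace ℝ (Fin 2)) := Metric.ball 0 1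

/-- The lower unit disk `B⁻`, centered at `(0, -2-2δ)`. -/
noncomputable def Bm (δ : ℝ) : Set (EuclideanSpace ℝ (Fin 2)) := Metric.ball (ctr δ) 1

open Classical in
/-- The conductivity: `κ⁺` on `B⁺`, `κ⁻` on `B⁻`, and `1` elsewhere. -/
noncomputable def aFun (δ κp κm : ℝ) (x : EuclideanSpace ℝ (Fin 2)) : ℝ :=
  if x ∈ Bp then κp else if x ∈ Bm δ then κm else 1

/-- `Ω^σ = {x ∈ Ω : dist(x, ∂Ω) ≥ σ}`. -/
noncomputable def innerReg (Ω : Set (EuclideanSpace ℝ (Fin 2))) (σ : ℝ) :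
    Set (EuclideanSpace ℝ (Fin 2)) :=
  {x ∈ Ω | σ ≤ Metric.infDist x (frontier Ω)}

/-- `Ω` has smooth boundary: it is the sublevel set of a smooth function with
nonvanishing gradient on the boundary. -/
def SmoothBoundary (Ω : Set (EuclideanSpace ℝ (Fin 2))) : Prop :=
  ∃ f : EuclideanSpace ℝ (Fin 2) → ℝ, ContDiff ℝ (⊤ : ℕ∞) f ∧ Ω = {x | f x < 0} ∧
    ∀ x ∈ frontier Ω, fderiv ℝ f x ≠ 0

/-- `‖φ‖_{L^∞(∂Ω)}`. -/
noncomputable def bdryNorm (Ω : Set (EuclideanSpace ℝ (Fin 2))) (φ : EuclideanSpace ℝ (Fin 2) → ℝ) : ℝ :=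
  sSup ((fun y => |φ y|) '' frontier Ω)


/-- Euclidean product of the gradients of two functions on the complex plane. -/
noncomputable def cdot (f g : ℂ → ℝ) (z : ℂ) : ℝ :=
  fderiv ℝ f z 1 * fderiv ℝ g z 1 + fderiv ℝ f z Complex.I * fderiv ℝ g z Complex.I

/-- Mollification. -/
noncomputable def moll (ρ : ContDiffBump (0:ℂ)) (g : ℂ → ℝ) : ℂ → ℝ :=
  convolution (ρ.normed volume) g (ContinuousLinearMap.lsmul ℝ ℝ) volume

lemma moll_apply (ρ : ContDiffBump (0:ℂ)) (g : ℂ → ℝ) (z : ℂ) :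
    moll ρ g z = ∫ y, ρ.normed volume y * g (z - y) := by
  simp [moll, convolution_def]

lemma moll_contDiff (ρ : ContDiffBump (0:ℂ)) {g : ℂ → ℝ} (hg : LocallyIntegrable g volume) :
    ContDiff ℝ (⊤ : ℕ∞) (moll ρ g) :=
  HasCompactSupport.contDiff_convolution_left _ (ρ.hasCompactSupport_normed) ρ.contDiff_normed hg

lemma fderiv_abs_le {ψ : ℂ → ℝ} {K : NNReal} (h : LipschitzWith K ψ) (v z : ℂ) :
    |fderiv ℝ ψ z v| ≤ K * ‖v‖ := by
  have := (fderiv ℝ ψ z).le_of_opNorm_le (norm_fderiv_le_of_lipschitz ℝ h) v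
  simpa using this

lemma locInt_of_bdd {g : ℂ → ℝ} (hm : Measurable g) {C : ℝ} (h : ∀ z, |g z| ≤ C) :
    LocallyIntegrable g volume := by
  intro x
  refine ⟨Metric.ball x 1, Metric.ball_mem_nhds x one_pos, ?_⟩
  refine Measure.integrableOn_of_bounded (M := C) ?_ hm.aestronglyMeasurable ?_
  · exact measure_ball_lt_top.ne
  · exact Filter.Eventually.of_forall h

lemma locInt_fderiv {ψ : ℂ → ℝ} {K : NNReal} (h : LipschitzWith K ψ) (v : ℂ) :
    LocallyIntegrable (fun z => fderiv ℝ ψ z v) volume :=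
  locInt_of_bdd (measurable_fderiv_apply_const ℝ ψ v) (fderiv_abs_le h v)

lemma moll_fderiv (ρ : ContDiffBump (0:ℂ)) {ψ : ℂ → ℝ} {K : NNReal} (h : LipschitzWith K ψ)
    (v z : ℂ) : fderiv ℝ (moll ρ ψ) z v = moll ρ (fun w => fderiv ℝ ψ w v) z := by
  have hd : DifferentiableAt ℝ (moll ρ ψ) z :=
    ((moll_contDiff ρ h.continuous.locallyIntegrable).differentiable (by simp)).differentiableAt
  have h1 : HasDerivAt (fun t : ℝ => moll ρ ψ (z + t • v)) (fderiv ℝ (moll ρ ψ) z v) 0 := by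
    have := hd.hasFDerivAt.hasLineDerivAt v
    exact this
  have h2 : HasDerivAt (fun t : ℝ => moll ρ ψ (z + t • v))
      (moll ρ (fun w => fderiv ℝ ψ w v) z) 0 := by
    simp only [moll_apply]
    have hρc : Continuous (ρ.normed volume) := ρ.continuous_normed
    refine (hasDerivAt_integral_of_dominated_loc_of_lip (s := univ)
      (bound := fun y => ρ.normed volume y * (K * ‖v‖)) Filter.univ_mem ?_ ?_ ?_ ?_ ?_ ?_).2
    · refine Filter.Eventually.of_forall fun t => ?_
      have := h.continuous
      exact Continuous.aestronglyMeasurable (by fun_prop)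
    · have := h.continuous
      refine Continuous.integrable_of_hasCompactSupport (by fun_prop) ?_
      exact ρ.hasCompactSupport_normed.mul_right
    · exact (hρc.measurable.mul ((measurable_fderiv_apply_const ℝ ψ v).comp
        (measurable_const.sub measurable_id))).aestronglyMeasurable
    · refine Filter.Eventually.of_forall fun y => ?_
      refine LipschitzOnWith.of_dist_le_mul fun s _ t _ => ?_
      have h3 := h.dist_le_mul (z + s • v - y) (z + t • v - y)
      have h4 : dist (z + s • v - y) (z + t • v - y) = dist s t * ‖v‖ := by
        rw [dist_eq_norm, dist_eq_norm]
        have : z + s • v - y - (z + t • v - y) = (s - t) • v := by rw [sub_smul]; ring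
        rw [this, norm_smul]
      rw [h4] at h3
      have hn : 0 ≤ ρ.normed volume y := ρ.nonneg_normed y
      rw [dist_eq_norm] at h3 ⊢
      rw [← mul_sub, norm_mul, Real.norm_of_nonneg hn]
      simp only [Real.coe_nnabs]
      rw [abs_of_nonneg (by positivity)]
      calc _ ≤ ρ.normed volume y * (K * (dist s t * ‖v‖)) := by gcongr
        _ = _ := by ring
    · refine Integrable.mul_const ?_ _
      exact ρ.integrable_normed
    · have hae := h.ae_differentiableAt (μ := volume)
      have : ∀ᵐ y : ℂ, DifferentiableAt ℝ ψ (z - y) := by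
        have := (Measure.measurePreserving_sub_left volume z).quasiMeasurePreserving.ae hae
        simpa using this
      filter_upwards [this] with y hy
      have h5 := hy.hasFDerivAt.hasLineDerivAt v
      have h6 : HasDerivAt (fun t : ℝ => ψ (z - y + t • v)) (fderiv ℝ ψ (z - y) v) 0 := h5
      have := h6.const_mul (ρ.normed volume y)
      refine this.congr_of_eventuallyEq (Filter.Eventually.of_forall fun t => ?_)
      simp only
      congr 2; ring
  exact h1.unique h2

lemma moll_abs_le (ρ : ContDiffBump (0:ℂ)) {g : ℂ → ℝ} {C : ℝ} (h : ∀ z, |g z| ≤ C) (z : ℂ) :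
    |moll ρ g z| ≤ C := by
  rw [moll_apply]
  have : ‖∫ y, ρ.normed volume y * g (z - y)‖ ≤ ∫ y, ρ.normed volume y * C := by
    refine norm_integral_le_of_norm_le (ρ.integrable_normed.mul_const C) ?_
    refine Filter.Eventually.of_forall fun y => ?_
    have hn : 0 ≤ ρ.normed volume y := ρ.nonneg_normed y
    rw [norm_mul, Real.norm_of_nonneg hn]
    exact mul_le_mul_of_nonneg_left (h _) hn
  rwa [integral_mul_const, ρ.integral_normed, one_mul] at this

/-- A standard sequence of bumps. -/
noncomputable def bmp (n : ℕ) : ContDiffBump (0:ℂ) :=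
  ⟨1 / (2 * ((n:ℝ) + 1)), 1 / ((n:ℝ) + 1), by positivity, by
    apply one_div_lt_one_div_of_lt <;> nlinarith [n.cast_nonneg (α := ℝ)]⟩

lemma bmp_tendsto : Filter.Tendsto (fun n => (bmp n).rOut) Filter.atTop (nhds 0) :=
  tendsto_one_div_add_atTop_nhds_zero_nat

lemma bmp_le (n : ℕ) : (bmp n).rOut ≤ 2 * (bmp n).rIn := by
  have : (0:ℝ) < (n:ℝ) + 1 := by positivity
  simp only [bmp]
  apply le_of_eq
  field_simp

lemma moll_tsupport (ρ : ContDiffBump (0:ℂ)) (ψ : ℂ → ℝ) :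
    tsupport (moll ρ ψ) ⊆ Metric.cthickening ρ.rOut (tsupport ψ) := by
  refine closure_minimal ?_ Metric.isClosed_cthickening
  intro z hz
  by_contra hc
  apply hz
  rw [moll_apply]
  apply integral_eq_zero_of_ae
  refine Filter.Eventually.of_forall fun y => ?_
  simp only [Pi.zero_apply, mul_eq_zero]
  by_cases hy : y ∈ Metric.ball (0:ℂ) ρ.rOut
  · right
    by_contra h0
    apply hc
    have hm : z - y ∈ tsupport ψ := subset_tsupport _ h0
    refine Metric.mem_cthickening_of_dist_le z (z - y) _ _ hm ?_
    rw [dist_eq_norm]; simp at hy ⊢; exact hy.le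
  · left
    rw [← ρ.support_normed_eq (μ := volume)] at hy
    simpa using hy

lemma moll_dist_le (ρ : ContDiffBump (0:ℂ)) {ψ : ℂ → ℝ} {K : NNReal} (h : LipschitzWith K ψ)
    (z : ℂ) : |moll ρ ψ z - ψ z| ≤ K * ρ.rOut := by
  have := ContDiffBump.dist_normed_convolution_le (φ := ρ) (μ := volume) (g := ψ) (x₀ := z)
    (ε := K * ρ.rOut) h.continuous.aestronglyMeasurable (fun x hx => by
      refine (h.dist_le_mul x z).trans ?_
      gcongr
      exact (Metric.mem_ball.1 hx).le)
  exact this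

/-- The weak formulation extends to Lipschitz test functions. -/
lemma weak_lip {u : ℂ → ℝ} {K : NNReal} (hu : LipschitzWith K u) {a : ℂ → ℝ} (ham : Measurable a)
    {A : ℝ} (ha : ∀ z, |a z| ≤ A) {U : Set ℂ} (hU : IsOpen U)
    (hw : ∀ ψ : ℂ → ℝ, ContDiff ℝ (⊤ : ℕ∞) ψ → HasCompactSupport ψ → tsupport ψ ⊆ U →
      ∫ z, a z * cdot u ψ z = 0)
    {ψ : ℂ → ℝ} {L : NNReal} (hψ : LipschitzWith L ψ) (hc : HasCompactSupport ψ)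
    (hs : tsupport ψ ⊆ U) : ∫ z, a z * cdot u ψ z = 0 := by
  obtain ⟨r, hr, hrU⟩ := hc.isCompact.exists_cthickening_subset_open hU hs
  set S := Metric.cthickening r (tsupport ψ) with hS
  have hSc : IsCompact S := hc.isCompact.cthickening
  have hA : 0 ≤ A := (abs_nonneg _).trans (ha 0)
  have hlim : Filter.Tendsto (fun n => ∫ z, a z * cdot u (moll (bmp n) ψ) z) Filter.atTop
      (nhds (∫ z, a z * cdot u ψ z)) := by
    have hev : ∀ᶠ n in Filter.atTop, (bmp n).rOut ≤ r :=
      (bmp_tendsto.eventually (gt_mem_nhds hr)).mono fun _ h => h.le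
    refine tendsto_integral_filter_of_dominated_convergence
      (S.indicator fun _ => A * (K * L + K * L)) ?_ ?_ ?_ ?_
    · refine Filter.Eventually.of_forall fun n => ?_
      unfold cdot
      have := measurable_fderiv_apply_const ℝ u
      have := measurable_fderiv_apply_const ℝ (moll (bmp n) ψ)
      fun_prop
    · filter_upwards [hev] with n hn
      refine Filter.Eventually.of_forall fun z => ?_
      by_cases hz : z ∈ S
      · rw [indicator_of_mem hz, norm_mul]
        refine mul_le_mul (ha z) ?_ (norm_nonneg _) hA
        refine (norm_add_le _ _).trans ?_
        rw [norm_mul, norm_mul]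
        rw [moll_fderiv _ hψ, moll_fderiv _ hψ]
        have e1 := fderiv_abs_le hu 1 z
        have e2 := fderiv_abs_le hu Complex.I z
        have e3 := moll_abs_le (bmp n) (fderiv_abs_le hψ 1) z
        have e4 := moll_abs_le (bmp n) (fderiv_abs_le hψ Complex.I) z
        simp only [norm_one, Complex.norm_I, mul_one] at e1 e2 e3 e4
        exact add_le_add (mul_le_mul e1 e3 (abs_nonneg _) (by positivity))
          (mul_le_mul e2 e4 (abs_nonneg _) (by positivity))
      · rw [indicator_of_notMem hz]
        have : z ∉ tsupport (moll (bmp n) ψ) := fun h =>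
          hz (Metric.cthickening_mono hn _ (moll_tsupport _ _ h))
        have h0 : fderiv ℝ (moll (bmp n) ψ) z = 0 := by
          by_contra h
          exact this (support_fderiv_subset ℝ h)
        simp [cdot, h0]
    · rw [integrable_indicator_iff hSc.measurableSet]
      exact integrableOn_const hSc.measure_lt_top.ne
    · have l1 := ContDiffBump.ae_convolution_tendsto_right_of_locallyIntegrable (μ := volume)
        bmp_tendsto (Filter.Eventually.of_forall bmp_le) (locInt_fderiv hψ 1)
      have l2 := ContDiffBump.ae_convolution_tendsto_right_of_locallyIntegrable (μ := volume)
        bmp_tendsto (Filter.Eventually.of_forall bmp_le) (locInt_fderiv hψ Complex.I)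
      filter_upwards [l1, l2] with z h1 h2
      unfold cdot
      simp only [moll_fderiv _ hψ]
      exact ((h1.const_mul _).add (h2.const_mul _)).const_mul _
  have hz : ∀ᶠ n in Filter.atTop, ∫ z, a z * cdot u (moll (bmp n) ψ) z = 0 := by
    filter_upwards [bmp_tendsto.eventually (gt_mem_nhds hr)] with n hn
    have hsub : tsupport (moll (bmp n) ψ) ⊆ S :=
      (moll_tsupport _ _).trans (Metric.cthickening_mono hn.le _)
    exact hw _ (moll_contDiff _ hψ.continuous.locallyIntegrable)
      (hSc.of_isClosed_subset (isClosed_tsupport _) hsub) (hsub.trans hrU)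
  exact tendsto_nhds_unique hlim (tendsto_const_nhds.congr' (hz.mono fun _ h => h.symm))

section helpers
open InnerProductSpace


lemma bc_ball {F : ℂ → ℂ} {c : ℂ} {R M : ℝ} (hR : 0 < R) (hM : 0 < M)
    (hF : DifferentiableOn ℂ F (Metric.ball c R)) (h : ∀ z ∈ Metric.ball c R, (F z).re ≤ M)
    {z : ℂ} (hz : z ∈ Metric.closedBall c (R/2)) : ‖F z‖ ≤ 2 * M + 3 * ‖F c‖ := by
  have hzn : ‖z - c‖ ≤ R / 2 := by simpa [dist_eq_norm] using hz
  have key := Complex.borelCaratheodory (f := fun w => F (c + w)) (R := R) (z := z - c) hM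
    (by
      refine hF.comp (by fun_prop) ?_
      intro w hw; simpa using hw)
    (by
      intro w hw
      exact h _ (by simpa using hw)) hR (by simp; linarith)
  simp only [add_sub_cancel, add_zero] at key
  have hp : 0 < R - ‖z - c‖ := by linarith
  refine key.trans (add_le_add ?_ ?_)
  · rw [div_le_iff₀ hp]; nlinarith [norm_nonneg (z - c)]
  · rw [div_le_iff₀ hp]; nlinarith [norm_nonneg (z - c), norm_nonneg (F c)]

lemma re_fderiv {F : ℂ → ℂ} {z : ℂ} (hF : DifferentiableAt ℂ F z) (v : ℂ) :
    fderiv ℝ (fun w => (F w).re) z v = (deriv F z * v).re := by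
  have h1 : HasFDerivAt F ((ContinuousLinearMap.toSpanSingleton ℂ (deriv F z)).restrictScalars ℝ) z :=
    hF.hasDerivAt.hasFDerivAt.restrictScalars ℝ
  have h2 := Complex.reCLM.hasFDerivAt.comp z h1
  have h3 : fderiv ℝ (fun w => (F w).re) z = _ := h2.fderiv
  rw [h3]
  simp [mul_comm]

lemma re_fderiv_norm_le {F : ℂ → ℂ} {z : ℂ} (hF : DifferentiableAt ℂ F z) :
    ‖fderiv ℝ (fun w => (F w).re) z‖ ≤ ‖deriv F z‖ := by
  refine ContinuousLinearMap.opNorm_le_bound _ (norm_nonneg _) fun v => ?_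
  rw [re_fderiv hF, ← norm_mul]
  exact Complex.abs_re_le_norm _

lemma grad_est {u : ℂ → ℝ} {c : ℂ} {R M m : ℝ} (hR : 0 < R) (hM : 0 ≤ M)
    (hu : HarmonicOnNhd u (Metric.ball c R)) (hb : ∀ z ∈ Metric.ball c R, |u z - m| ≤ M) :
    ‖fderiv ℝ u c‖ ≤ 8 * M / R := by
  obtain ⟨F, hF, hFu⟩ := hu.exists_analyticOnNhd_ball_re_eq
  have hcm : c ∈ Metric.ball c R := Metric.mem_ball_self hR
  have hmain : ∀ t > 0, ‖deriv F c‖ ≤ 8 * M / R + t := by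
    intro t ht
    have hb2 : ∀ z ∈ Metric.ball c R, (F z - F c).re ≤ 2 * M + t * R / 4 := by
      intro z hz
      have e1 := abs_le.1 (hb z hz)
      have e2 := abs_le.1 (hb c hcm)
      have e3 : (F z).re = u z := hFu hz
      have e4 : (F c).re = u c := hFu hcm
      have : 0 < t * R / 4 := by positivity
      simp only [Complex.sub_re]; linarith [e1.2, e2.1]
    have hd : DifferentiableOn ℂ (fun z => F z - F c) (Metric.ball c R) :=
      hF.differentiableOn.sub_const _
    have h1 := Complex.norm_deriv_le_of_forall_mem_sphere_norm_le (c := c) (R := R/2)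
      (C := 4 * M + t * R / 2)
      (f := fun z => F z - F c) (by positivity) (by
        apply DifferentiableOn.diffContOnCl
        refine hd.mono ?_
        rw [closure_ball _ (by positivity)]
        exact Metric.closedBall_subset_ball (by linarith))
        (fun z hz => by
          have := bc_ball (M := 2 * M + t * R / 4) hR (by positivity) hd hb2
            (Metric.sphere_subset_closedBall hz)
          simp only [sub_self, norm_zero, mul_zero, add_zero] at this
          linarith)
    simp only [deriv_sub_const_fun] at h1
    refine h1.trans (le_of_eq ?_)
    field_simp; ring
  have h2 := le_of_forall_pos_le_add hmain
  have h3 : fderiv ℝ u c = fderiv ℝ (fun w => (F w).re) c := by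
    apply Filter.EventuallyEq.fderiv_eq
    filter_upwards [Metric.isOpen_ball.mem_nhds hcm] with z hz
    exact (hFu hz).symm
  rw [h3]
  exact (re_fderiv_norm_le (hF c hcm).differentiableAt).trans h2

lemma harm_limit {u : ℂ → ℝ} {v : ℕ → ℂ → ℝ} {c : ℂ} {R : ℝ} (hR : 0 < R)
    (hv : ∀ᶠ n in Filter.atTop, HarmonicOnNhd (v n) (Metric.ball c R)) {e : ℕ → ℝ}
    (he : Filter.Tendsto e Filter.atTop (nhds 0))
    (hve : ∀ n z, |v n z - u z| ≤ e n) : HarmonicAt u c := by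
  have hcm : c ∈ Metric.ball c R := Metric.mem_ball_self hR
  have hex : ∀ n, ∃ F : ℂ → ℂ, HarmonicOnNhd (v n) (Metric.ball c R) →
      (AnalyticOnNhd ℂ F (Metric.ball c R) ∧ (∀ z ∈ Metric.ball c R, (F z).re = v n z) ∧
        (F c).im = 0) := by
    intro n
    by_cases h : HarmonicOnNhd (v n) (Metric.ball c R)
    · obtain ⟨F, hF, hFu⟩ := h.exists_analyticOnNhd_ball_re_eq
      refine ⟨fun z => F z - (F c).im * Complex.I, fun _ => ⟨?_, ?_, ?_⟩⟩
      · exact hF.sub analyticOnNhd_const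
      · intro z hz; simpa using hFu hz
      · simp
    · exact ⟨0, fun h' => absurd h' h⟩
  choose F hF using hex
  have hF' := hv.mono fun n hn => hF n hn
  have hcau : UniformCauchySeqOn F Filter.atTop (Metric.ball c (R/2)) := by
    rw [Metric.uniformCauchySeqOn_iff]
    intro ε hε
    obtain ⟨N1, hN1⟩ := Filter.eventually_atTop.1 hF'
    obtain ⟨N2, hN2⟩ := Filter.eventually_atTop.1
      (he.eventually (gt_mem_nhds (show (0:ℝ) < ε / 20 by positivity)))
    refine ⟨max N1 N2, fun m hm n hn z hz => ?_⟩
    obtain ⟨am, bm, cm⟩ := hN1 m (le_of_max_le_left hm)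
    obtain ⟨an, bn, cn⟩ := hN1 n (le_of_max_le_left hn)
    have em := hN2 m (le_of_max_le_right hm)
    have en := hN2 n (le_of_max_le_right hn)
    have hdiff : ∀ w, |v m w - v n w| ≤ ε / 10 := by
      intro w
      have e1 := abs_le.1 (hve m w)
      have e2 := abs_le.1 (hve n w)
      rw [abs_le]; constructor <;> linarith [e1.1, e1.2, e2.1, e2.2]
    have key := bc_ball (F := fun z => F m z - F n z) (c := c) (R := R) (M := ε / 10) hR (by positivity)
      (am.differentiableOn.sub an.differentiableOn) (fun w hw => by
        simp only [Complex.sub_re]; rw [bm w hw, bn w hw]; exact (abs_le.1 (hdiff w)).2)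
      (Metric.ball_subset_closedBall hz)
    have hc0 : ‖F m c - F n c‖ ≤ ε / 10 := by
      have : F m c - F n c = ((v m c - v n c : ℝ) : ℂ) := by
        apply Complex.ext
        · simp [bm c hcm, bn c hcm]
        · simp [cm, cn]
      rw [this, Complex.norm_real]; exact hdiff c
    rw [dist_eq_norm]
    linarith
  have hptw : ∀ z, ∃ w, z ∈ Metric.ball c (R/2) →
      Filter.Tendsto (fun n => F n z) Filter.atTop (nhds w) := by
    intro z
    by_cases hz : z ∈ Metric.ball c (R/2)
    · obtain ⟨w, hw⟩ := cauchySeq_tendsto_of_complete (hcau.cauchySeq hz)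
      exact ⟨w, fun _ => hw⟩
    · exact ⟨0, fun h => absurd h hz⟩
  choose G hG using hptw
  have hunif := hcau.tendstoUniformlyOn_of_tendsto hG
  have hsub : Metric.ball c (R/2) ⊆ Metric.ball c R := Metric.ball_subset_ball (by linarith)
  have hGd : DifferentiableOn ℂ G (Metric.ball c (R/2)) :=
    hunif.tendstoLocallyUniformlyOn.differentiableOn
      (hF'.mono fun n hn => hn.1.differentiableOn.mono hsub) Metric.isOpen_ball
  have hc2 : Metric.ball c (R/2) ∈ nhds c := Metric.ball_mem_nhds c (by positivity)
  have hGa : AnalyticAt ℂ G c := hGd.analyticAt hc2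
  refine (harmonicAt_congr_nhds ?_).1 hGa.harmonicAt_re
  filter_upwards [hc2] with z hz
  have h1 : Filter.Tendsto (fun n => (F n z).re) Filter.atTop (nhds (G z).re) :=
    (Complex.continuous_re.tendsto _).comp (hG z hz)
  have h2 : Filter.Tendsto (fun n => (F n z).re) Filter.atTop (nhds (u z)) := by
    rw [tendsto_iff_norm_sub_tendsto_zero]
    refine squeeze_zero' (Filter.Eventually.of_forall fun _ => norm_nonneg _) ?_ he
    filter_upwards [hF'] with n hn
    rw [hn.2.1 z (hsub hz)]
    exact hve n z
  exact tendsto_nhds_unique h1 h2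

lemma contDiffAt_two_laplacian {w : ℂ → ℝ} {z : ℂ} (hw : ContDiffAt ℝ 2 w z) :
    Laplacian.laplacian w z = fderiv ℝ (fun y => fderiv ℝ w y 1) z 1
      + fderiv ℝ (fun y => fderiv ℝ w y Complex.I) z Complex.I := by
  rw [laplacian_eq_iteratedFDeriv_complexPlane]
  simp only [iteratedFDeriv_two_apply]
  have hd : DifferentiableAt ℝ (fderiv ℝ w) z :=
    (hw.fderiv_right (m := 1) (by norm_num)).differentiableAt (by simp)
  have : ∀ v : ℂ, fderiv ℝ (fun y => fderiv ℝ w y v) z = (fderiv ℝ (fderiv ℝ w) z).flip v := by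
    intro v
    have := (hd.hasFDerivAt.clm_apply (hasFDerivAt_const v z)).fderiv
    rw [this]; ext; simp
  simp [this]

/-- Weyl's lemma for Lipschitz functions. -/
lemma weyl {u : ℂ → ℝ} {K : NNReal} (hu : LipschitzWith K u) {U : Set ℂ} (hU : IsOpen U)
    (hw : ∀ ψ : ℂ → ℝ, ContDiff ℝ (⊤ : ℕ∞) ψ → HasCompactSupport ψ → tsupport ψ ⊆ U →
      ∫ z, cdot u ψ z = 0) : HarmonicOnNhd u U := by
  intro c hc
  obtain ⟨R, hR, hRU⟩ := Metric.isOpen_iff.1 hU c hc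
  refine harm_limit (v := fun n => moll (bmp n) u) (e := fun n => K * (bmp n).rOut)
    (R := R / 2) (by positivity) ?_ ?_ (fun n z => moll_dist_le _ hu z)
  · filter_upwards [bmp_tendsto.eventually (gt_mem_nhds (show (0:ℝ) < R / 2 by positivity))]
      with n hn
    set ρ := bmp n
    have hcd := moll_contDiff ρ hu.continuous.locallyIntegrable
    have hcd2 : ∀ z, ContDiffAt ℝ 2 (moll ρ u) z := fun z =>
      (contDiff_infty.1 hcd 2).contDiffAt
    have hzero : ∀ z ∈ Metric.ball c (R/2), Laplacian.laplacian (moll ρ u) z = 0 := by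
      intro z hz
      rw [contDiffAt_two_laplacian (hcd2 z)]
      have hform : ∀ v : ℂ, fderiv ℝ (fun y => fderiv ℝ (moll ρ u) y v) z v
          = ∫ t, fderiv ℝ (ρ.normed volume) (z - t) v * fderiv ℝ u t v := by
        intro v
        have e1 : (fun y => fderiv ℝ (moll ρ u) y v) = moll ρ (fun w => fderiv ℝ u w v) := by
          funext y; exact moll_fderiv ρ hu v y
        rw [e1]
        have h1 := HasCompactSupport.hasFDerivAt_convolution_left (ContinuousLinearMap.lsmul ℝ ℝ)
          (μ := volume) (ρ.hasCompactSupport_normed (μ := volume))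
          (ρ.contDiff_normed (n := 1)) (locInt_fderiv hu v) z
        have h2 : fderiv ℝ (moll ρ (fun w => fderiv ℝ u w v)) z = _ := h1.fderiv
        rw [h2]
        have hInteg : ConvolutionExistsAt (fderiv ℝ (ρ.normed volume)) (fun w => fderiv ℝ u w v) z
            (ContinuousLinearMap.precompL ℂ (ContinuousLinearMap.lsmul ℝ ℝ)) volume :=
          HasCompactSupport.convolutionExists_left _
            ((ρ.hasCompactSupport_normed (μ := volume)).fderiv (𝕜 := ℝ))
            ((ρ.contDiff_normed (n := 1)).continuous_fderiv (by simp)) (locInt_fderiv hu v) z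
        rw [convolution_def, ContinuousLinearMap.integral_apply hInteg,
          ← integral_sub_left_eq_self _ volume z]
        simp
      rw [hform, hform, ← integral_add]
      · set ψ : ℂ → ℝ := fun t => ρ.normed volume (z - t) with hψ
        have hψc : ContDiff ℝ (⊤ : ℕ∞) ψ := by
          have := ρ.contDiff_normed (n := (⊤ : ℕ∞)) (μ := volume)
          exact this.comp (contDiff_const.sub contDiff_id)
        have hsub : tsupport ψ ⊆ Metric.closedBall z ρ.rOut := by
          refine closure_minimal ?_ Metric.isClosed_closedBall
          intro t ht
          have : z - t ∈ Function.support (ρ.normed volume) := ht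
          rw [ρ.support_normed_eq] at this
          simp only [Metric.mem_ball, dist_zero_right] at this
          rw [Metric.mem_closedBall, dist_comm, dist_eq_norm]; exact this.le
        have hsubU : tsupport ψ ⊆ U := by
          refine hsub.trans (fun t ht => hRU ?_)
          rw [Metric.mem_closedBall] at ht
          rw [Metric.mem_ball] at hz ⊢
          linarith [dist_triangle t z c]
        have h0 := hw ψ hψc ((isCompact_closedBall z ρ.rOut).of_isClosed_subset
          (isClosed_tsupport _) hsub) hsubU
        have hder : ∀ t v, fderiv ℝ ψ t v = - fderiv ℝ (ρ.normed volume) (z - t) v := by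
          intro t v
          have hd : DifferentiableAt ℝ (ρ.normed volume) (z - t) :=
            ((ρ.contDiff_normed (n := 1)).differentiable (by simp)).differentiableAt
          have := (hd.hasFDerivAt.comp t ((hasFDerivAt_id (𝕜 := ℝ) t).const_sub z)).fderiv
          have h' : fderiv ℝ ψ t = _ := this
          rw [h']; simp
        have : ∀ t, fderiv ℝ (ρ.normed volume) (z - t) 1 * fderiv ℝ u t 1
            + fderiv ℝ (ρ.normed volume) (z - t) Complex.I * fderiv ℝ u t Complex.I
            = - cdot u ψ t := by
          intro t; simp only [cdot, hder]; ring
        simp only [this]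
        rw [integral_neg, h0, neg_zero]
      all_goals
        refine (Integrable.bdd_mul (c := K * max ‖(1:ℂ)‖ ‖Complex.I‖) ?_ ((measurable_fderiv_apply_const ℝ u _).aestronglyMeasurable)
          (Filter.Eventually.of_forall fun t => (fderiv_abs_le hu _ t).trans (by simp))).congr
          (Filter.Eventually.of_forall fun t => mul_comm _ _)
        have hcc : Continuous (fun t => fderiv ℝ (ρ.normed volume) t) :=
          (ρ.contDiff_normed (n := 1)).continuous_fderiv (by simp)
        have hi : ∀ v : ℂ, Integrable (fun t => fderiv ℝ (ρ.normed volume) t v) volume := fun v =>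
          Continuous.integrable_of_hasCompactSupport (by fun_prop)
            ((ρ.hasCompactSupport_normed (μ := volume)).fderiv_apply (𝕜 := ℝ) v)
        exact (hi _).comp_sub_left z
    intro z hz
    refine ⟨hcd2 z, ?_⟩
    filter_upwards [Metric.isOpen_ball.mem_nhds hz] with w hw
    exact hzero w hw
  · simpa using bmp_tendsto.const_mul (K : ℝ)


lemma seg_frontier {s V : Set ℂ} (hs : IsPreconnected s) {z w : ℂ} (hz : z ∈ s) (hzV : z ∈ V)
    (hw : w ∈ s) (hwV : w ∉ V) : ∃ p ∈ s, p ∈ frontier V := by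
  by_contra! h
  have hsub : s ⊆ interior V ∪ (closure V)ᶜ := by
    intro p hp
    by_cases h1 : p ∈ interior V
    · exact Or.inl h1
    · right
      intro h2
      exact h p hp ⟨h2, h1⟩
  obtain ⟨p, -, hp1, hp2⟩ := hs _ _ isOpen_interior isClosed_closure.isOpen_compl hsub
    ⟨z, hz, (hsub hz).resolve_right fun h2 => h2 (subset_closure hzV)⟩
    ⟨w, hw, (hsub hw).resolve_left fun h2 => hwV (interior_subset h2)⟩
  exact hp2 (subset_closure (interior_subset hp1))

lemma lip_glue {g : ℂ → ℝ} {V : Set ℂ} {K : NNReal}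
    (hg : LipschitzOnWith K g (closure V)) (h0 : ∀ z ∈ frontier V, g z = 0) :
    LipschitzWith K (V.indicator g) := by
  have key : ∀ z ∈ V, ∀ w ∉ V, |g z| ≤ K * dist z w := by
    intro z hz w hw
    obtain ⟨p, hp1, hp2⟩ := seg_frontier (convex_segment (𝕜 := ℝ) z w).isPreconnected
      (left_mem_segment ℝ z w) hz (right_mem_segment ℝ z w) hw
    have h1 := hg.dist_le_mul z (subset_closure hz) p (frontier_subset_closure hp2)
    rw [h0 p hp2, Real.dist_eq, sub_zero] at h1
    refine h1.trans ?_
    gcongr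
    have := dist_add_dist_of_mem_segment hp1
    linarith [dist_nonneg (x := p) (y := w)]
  refine LipschitzWith.of_dist_le_mul fun z w => ?_
  by_cases hz : z ∈ V <;> by_cases hw : w ∈ V
  · rw [indicator_of_mem hz, indicator_of_mem hw]
    exact hg.dist_le_mul z (subset_closure hz) w (subset_closure hw)
  · rw [indicator_of_mem hz, indicator_of_notMem hw, Real.dist_eq, sub_zero]
    exact key z hz w hw
  · rw [indicator_of_mem hw, indicator_of_notMem hz, dist_comm, Real.dist_eq, sub_zero, dist_comm]
    exact key w hw z hz
  · rw [indicator_of_notMem hz, indicator_of_notMem hw]; simp; positivity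

lemma cdot_measurable (u ψ : ℂ → ℝ) : Measurable (cdot u ψ) := by
  unfold cdot
  have := measurable_fderiv_apply_const ℝ u
  have := measurable_fderiv_apply_const ℝ ψ
  fun_prop

lemma cdot_abs_le {u ψ : ℂ → ℝ} {K L : NNReal} (hu : LipschitzWith K u) (hψ : LipschitzWith L ψ)
    (z : ℂ) : |cdot u ψ z| ≤ 2 * (K * L) := by
  have e1 := fderiv_abs_le hu 1 z
  have e2 := fderiv_abs_le hu Complex.I z
  have e3 := fderiv_abs_le hψ 1 z
  have e4 := fderiv_abs_le hψ Complex.I z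
  simp only [norm_one, Complex.norm_I, mul_one] at e1 e2 e3 e4
  unfold cdot
  refine (abs_add_le _ _).trans ?_
  rw [abs_mul, abs_mul, two_mul]
  exact add_le_add (mul_le_mul e1 e3 (abs_nonneg _) (by positivity))
    (mul_le_mul e2 e4 (abs_nonneg _) (by positivity))

lemma cdot_zero_right {u ψ : ℂ → ℝ} {z : ℂ} (h : fderiv ℝ ψ z = 0) : cdot u ψ z = 0 := by
  simp [cdot, h]

lemma fderiv_zero_off {ψ : ℂ → ℝ} {z : ℂ} (h : z ∉ tsupport ψ) : fderiv ℝ ψ z = 0 := by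
  by_contra h'
  exact h (support_fderiv_subset ℝ h')

lemma cdot_integrable {u ψ : ℂ → ℝ} {K L : NNReal} (hu : LipschitzWith K u)
    (hψ : LipschitzWith L ψ) (hc : HasCompactSupport ψ) {a : ℂ → ℝ} (ham : Measurable a)
    {A : ℝ} (ha : ∀ z, |a z| ≤ A) : Integrable (fun z => a z * cdot u ψ z) volume := by
  have hA : 0 ≤ A := (abs_nonneg _).trans (ha 0)
  have hi : Integrable ((tsupport ψ).indicator fun _ => A * (2 * (K * L : ℝ))) volume := by
    rw [integrable_indicator_iff hc.isCompact.measurableSet]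
    exact integrableOn_const hc.isCompact.measure_lt_top.ne
  refine hi.mono' (ham.mul (cdot_measurable u ψ)).aestronglyMeasurable
    (Filter.Eventually.of_forall fun z => ?_)
  by_cases hz : z ∈ tsupport ψ
  · rw [indicator_of_mem hz, norm_mul]
    exact mul_le_mul (ha z) (cdot_abs_le hu hψ z) (norm_nonneg _) hA
  · rw [indicator_of_notMem hz, cdot_zero_right (fderiv_zero_off hz)]; simp

lemma cdot_integrable' {u ψ : ℂ → ℝ} {K L : NNReal} (hu : LipschitzWith K u)
    (hψ : LipschitzWith L ψ) (hc : HasCompactSupport ψ) : Integrable (cdot u ψ) volume := by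
  have := cdot_integrable hu hψ hc (a := fun _ => 1) measurable_const (A := 1) (by simp)
  simpa using this

lemma max_princ {u : ℂ → ℝ} {K : NNReal} (hu : LipschitzWith K u) {a : ℂ → ℝ} (ham : Measurable a)
    {A : ℝ} (ha : ∀ z, |a z| ≤ A) (hpos : ∀ z, 0 < a z) {U : Set ℂ} (hU : IsOpen U)
    (hb : Bornology.IsBounded U)
    (hw : ∀ ψ : ℂ → ℝ, ContDiff ℝ (⊤ : ℕ∞) ψ → HasCompactSupport ψ → tsupport ψ ⊆ U →
      ∫ z, a z * cdot u ψ z = 0) {M : ℝ} (hM : ∀ z ∈ frontier U, u z ≤ M) :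
    ∀ z ∈ U, u z ≤ M := by
  intro z₀ hz₀
  by_contra! hlt
  set c := (M + u z₀) / 2 with hc
  have hc1 : M < c := by linarith
  have hc2 : c < u z₀ := by linarith
  set g : ℂ → ℝ := fun z => max (u z - c) 0 with hg
  have hgl : LipschitzWith K g := by
    have h1 : LipschitzWith K (fun z => u z - c) :=
      LipschitzWith.of_dist_le_mul fun x y => by simpa using hu.dist_le_mul x y
    exact h1.max_const 0
  set ψ := U.indicator g with hψ
  have hψl : LipschitzWith K ψ := lip_glue hgl.lipschitzOnWith (fun z hz => by
    simp only [hg]; exact max_eq_right (by linarith [hM z hz]))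
  have hψ0 : ∀ z, 0 ≤ ψ z := fun z => indicator_nonneg (fun _ _ => le_max_right _ _) z
  have hS : tsupport ψ ⊆ closure U ∩ {z | c ≤ u z} := by
    refine closure_minimal ?_ (isClosed_closure.inter (isClosed_le continuous_const hu.continuous))
    intro z hz
    have hzU : z ∈ U := by
      by_contra h; exact hz (indicator_of_notMem h _)
    refine ⟨subset_closure hzU, ?_⟩
    by_contra h
    apply hz
    simp only [mem_ofPred_eq, not_le] at h
    rw [hψ, indicator_of_mem hzU]
    exact max_eq_right (by linarith)
  have hSU : tsupport ψ ⊆ U := by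
    intro z hz
    obtain ⟨h1, h2⟩ := hS hz
    by_contra h
    have : z ∈ frontier U := by rw [frontier, hU.interior_eq]; exact ⟨h1, h⟩
    have h3 := hM z this
    simp only [mem_ofPred_eq] at h2
    linarith
  have hcs : HasCompactSupport ψ := by
    refine (hb.isCompact_closure).of_isClosed_subset (isClosed_tsupport _) fun z hz => (hS hz).1
  have h0 := weak_lip hu ham ha hU hw hψl hcs hSU
  have heq : ∀ z, cdot u ψ z = cdot ψ ψ z := by
    intro z
    by_cases hz : ψ z = 0
    · have : fderiv ℝ ψ z = 0 := by
        apply IsLocalMin.fderiv_eq_zero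
        exact Filter.Eventually.of_forall fun w => by rw [hz]; exact hψ0 w
      simp [cdot, this]
    · have hzU : z ∈ U := by
        by_contra h; exact hz (indicator_of_notMem h _)
      have hzc : c < u z := by
        by_contra h
        apply hz
        rw [hψ, indicator_of_mem hzU]
        exact max_eq_right (by linarith)
      have : fderiv ℝ ψ z = fderiv ℝ u z := by
        have h1 : ψ =ᶠ[nhds z] fun w => u w - c := by
          filter_upwards [hU.mem_nhds hzU,
            (isOpen_lt continuous_const hu.continuous).mem_nhds hzc] with w hw1 hw2
          have hw2' : c < u w := hw2
          rw [hψ, indicator_of_mem hw1]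
          exact max_eq_left (by linarith)
        rw [h1.fderiv_eq, fderiv_sub_const]
      simp [cdot, this]
  simp only [heq] at h0
  have hnn : ∀ z, 0 ≤ cdot ψ ψ z := fun z => by unfold cdot; nlinarith [mul_self_nonneg (fderiv ℝ ψ z 1), mul_self_nonneg (fderiv ℝ ψ z Complex.I)]
  rw [integral_eq_zero_iff_of_nonneg (fun z => mul_nonneg (hpos z).le (hnn z))
    (cdot_integrable hψl hψl hcs ham ha)] at h0
  have hharm : HarmonicOnNhd ψ univ := by
    refine weyl hψl isOpen_univ fun η _ _ _ => ?_
    apply integral_eq_zero_of_ae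
    filter_upwards [h0] with z hz
    simp only [Pi.zero_apply, mul_eq_zero, (hpos z).ne', false_or] at hz ⊢
    unfold cdot at hz
    have e1 : fderiv ℝ ψ z 1 = 0 := by
      nlinarith [mul_self_nonneg (fderiv ℝ ψ z 1), mul_self_nonneg (fderiv ℝ ψ z Complex.I)]
    have e2 : fderiv ℝ ψ z Complex.I = 0 := by
      nlinarith [mul_self_nonneg (fderiv ℝ ψ z 1), mul_self_nonneg (fderiv ℝ ψ z Complex.I)]
    simp [cdot, e1, e2]
  have hbd : ∃ C, ∀ z, |ψ z| ≤ C := by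
    obtain ⟨C, hC⟩ := hψl.continuous.bounded_above_of_compact_support hcs
    exact ⟨C, hC⟩
  obtain ⟨C, hC⟩ := hbd
  have hconst := bounded_harmonic_on_complex_plane_is_constant ψ hharm
    (Metric.isBounded_closedBall (x := (0:ℝ)) (r := C) |>.subset (by
      rintro _ ⟨z, rfl⟩
      simpa using hC z))
  obtain ⟨w, hw'⟩ : ∃ w, w ∉ tsupport ψ := by
    by_contra! h
    have : (univ : Set ℂ) ⊆ tsupport ψ := fun z _ => h z
    exact noncompact_univ ℂ (hcs.isCompact.of_isClosed_subset isClosed_univ this)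
  have e1 : ψ z₀ = ψ w := hconst z₀ w
  rw [image_eq_zero_of_notMem_tsupport hw', hψ, indicator_of_mem hz₀] at e1
  have : u z₀ - c ≤ 0 := by rw [← e1]; exact le_max_left _ _
  linarith


/-- Reflection in the unit circle centred at `c`. -/
noncomputable def rfl1 (c z : ℂ) : ℂ := c + ((starRingEnd ℂ) (z - c))⁻¹

open Classical in
/-- Folding map onto the closed unit disk centred at `c`. -/
noncomputable def fold1 (c z : ℂ) : ℂ := if ‖z - c‖ ≤ 1 then z else rfl1 c z

lemma rfl1_norm (c z : ℂ) : ‖rfl1 c z - c‖ = ‖z - c‖⁻¹ := by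
  simp [rfl1, -map_sub]

lemma rfl1_rfl1 (c z : ℂ) : rfl1 c (rfl1 c z) = z := by
  simp [rfl1, -map_sub]

lemma rfl1_dist (c : ℂ) {z w : ℂ} (hz : z ≠ c) (hw : w ≠ c) :
    dist (rfl1 c z) (rfl1 c w) = dist z w / (‖z - c‖ * ‖w - c‖) := by
  have hz' : (starRingEnd ℂ) (z - c) ≠ 0 := by simpa [-map_sub, sub_eq_zero] using hz
  have hw' : (starRingEnd ℂ) (w - c) ≠ 0 := by simpa [-map_sub, sub_eq_zero] using hw
  rw [dist_eq_norm, rfl1, rfl1, add_sub_add_left_eq_sub, inv_sub_inv hz' hw', ← map_sub, norm_div,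
    norm_mul, RCLike.norm_conj, RCLike.norm_conj, RCLike.norm_conj, dist_comm, dist_eq_norm]
  congr 2; ring

lemma rfl1_fix (c : ℂ) {z : ℂ} (hz : ‖z - c‖ = 1) : rfl1 c z = z := by
  have h : (z - c) * (starRingEnd ℂ) (z - c) = 1 := by
    rw [Complex.mul_conj, Complex.normSq_eq_norm_sq, hz]; simp
  have : ((starRingEnd ℂ) (z - c))⁻¹ = z - c := (eq_inv_of_mul_eq_one_left h).symm
  rw [rfl1, this]; ring

lemma fold1_lip (c : ℂ) : LipschitzWith 1 (fold1 c) := by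
  have hout : ∀ z w : ℂ, 1 ≤ ‖z - c‖ → 1 ≤ ‖w - c‖ → dist (rfl1 c z) (rfl1 c w) ≤ dist z w := by
    intro z w hz hw
    have hz' : z ≠ c := by rintro rfl; simp at hz; linarith
    have hw' : w ≠ c := by rintro rfl; simp at hw; linarith
    rw [rfl1_dist c hz' hw']
    exact div_le_self dist_nonneg (one_le_mul_of_one_le_of_one_le hz hw)
  have hmix : ∀ z w : ℂ, ‖z - c‖ ≤ 1 → 1 < ‖w - c‖ → dist z (rfl1 c w) ≤ dist z w := by
    intro z w hz hw
    obtain ⟨p, hp1, hp2⟩ := seg_frontier (V := Metric.closedBall c 1)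
      (convex_segment (𝕜 := ℝ) z w).isPreconnected
      (left_mem_segment ℝ z w) (by simpa [dist_eq_norm] using hz) (right_mem_segment ℝ z w)
      (by simpa [dist_eq_norm] using hw)
    rw [frontier_closedBall _ one_ne_zero] at hp2
    have hp : ‖p - c‖ = 1 := by simpa [dist_eq_norm] using hp2
    have h1 := dist_add_dist_of_mem_segment hp1
    have h2 := hout p w hp.ge hw.le
    rw [rfl1_fix c hp] at h2
    linarith [dist_triangle z p (rfl1 c w)]
  refine LipschitzWith.of_dist_le_mul fun z w => ?_
  simp only [NNReal.coe_one, one_mul, fold1]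
  split_ifs with h1 h2 h2
  · exact le_rfl
  · exact hmix z w h1 (not_le.1 h2)
  · rw [dist_comm, dist_comm z w]; exact hmix w z h2 (not_le.1 h1)
  · exact hout z w (not_le.1 h1).le (not_le.1 h2).le

/-- coefficient of the derivative of the reflection -/
noncomputable def rq (c z : ℂ) : ℂ := -(((starRingEnd ℂ) (z - c)) ^ 2)⁻¹

noncomputable def rD (q : ℂ) : ℂ →L[ℝ] ℂ :=
  (ContinuousLinearMap.mul ℝ ℂ q).comp (Complex.conjCLE : ℂ →L[ℝ] ℂ)

lemma rD_apply (q v : ℂ) : rD q v = q * (starRingEnd ℂ) v := by simp [rD]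

lemma rD_det (q : ℂ) : |(rD q).det| = ‖q‖ ^ 2 := by
  have : (rD q).det = -(q.re ^ 2 + q.im ^ 2) := by
    rw [ContinuousLinearMap.det, ← LinearMap.det_toMatrix Complex.basisOneI, Matrix.det_fin_two]
    simp [LinearMap.toMatrix_apply, rD_apply]
    ring
  rw [this, abs_neg, abs_of_nonneg (by positivity), Complex.sq_norm, Complex.normSq_apply]
  ring

lemma rfl1_hasFDerivAt (c : ℂ) {z : ℂ} (hz : z ≠ c) :
    HasFDerivAt (rfl1 c) (rD (rq c z)) z := by
  have hz' : (starRingEnd ℂ) (z - c) ≠ 0 := by simpa [-map_sub, sub_eq_zero] using hz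
  have h1 : HasFDerivAt (fun w : ℂ => (starRingEnd ℂ) (w - c)) (Complex.conjCLE : ℂ →L[ℝ] ℂ) z :=
    (Complex.conjCLE : ℂ →L[ℝ] ℂ).hasFDerivAt.comp z ((hasFDerivAt_id (𝕜 := ℝ) z).sub_const c)
  have h2 := ((hasDerivAt_inv hz').hasFDerivAt.restrictScalars ℝ).comp z h1
  have h3 := h2.const_add c
  refine h3.congr_fderiv ?_
  ext v
  simp [rD_apply, rq, mul_comm]

lemma lin_apply (l : ℂ →L[ℝ] ℝ) (v : ℂ) : l v = v.re * l 1 + v.im * l Complex.I := by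
  conv_lhs => rw [show v = v.re • (1:ℂ) + v.im • Complex.I by simp [Complex.re_add_im]]
  rw [map_add, map_smul, map_smul]; simp

/-- Conformal invariance of the Dirichlet form, pointwise. -/
lemma cdot_conf {u ψ : ℂ → ℝ} {c z : ℂ} (hz : z ≠ c) (hu : DifferentiableAt ℝ u z)
    (hψ : DifferentiableAt ℝ ψ (rfl1 c z)) :
    |(rD (rq c z)).det| * cdot (fun w => u (rfl1 c w)) ψ (rfl1 c z)
      = cdot u (fun w => ψ (rfl1 c w)) z := by
  have hz' : z - c ≠ 0 := sub_ne_zero.2 hz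
  have hz'' : (starRingEnd ℂ) (z - c) ≠ 0 := by simpa [-map_sub, sub_eq_zero] using hz
  have hR : rfl1 c z ≠ c := by
    intro h
    have := rfl1_norm c z
    rw [h, sub_self, norm_zero, eq_comm, inv_eq_zero, norm_eq_zero] at this
    exact hz' this
  have hu' : DifferentiableAt ℝ u (rfl1 c (rfl1 c z)) := by rwa [rfl1_rfl1]
  have d1 : fderiv ℝ (fun w => u (rfl1 c w)) (rfl1 c z) = (fderiv ℝ u z).comp (rD (rq c (rfl1 c z))) := by
    have := (hu'.hasFDerivAt.comp (rfl1 c z) (rfl1_hasFDerivAt c hR)).fderiv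
    rw [rfl1_rfl1] at this
    exact this
  have d2 : fderiv ℝ (fun w => ψ (rfl1 c w)) z = (fderiv ℝ ψ (rfl1 c z)).comp (rD (rq c z)) :=
    (hψ.hasFDerivAt.comp z (rfl1_hasFDerivAt c hz)).fderiv
  set q := rq c z with hq
  have hq0 : q ≠ 0 := by rw [hq, rq]; exact neg_ne_zero.2 (inv_ne_zero (pow_ne_zero 2 hz''))
  have hq2 : rq c (rfl1 c z) = ((starRingEnd ℂ) q)⁻¹ := by
    rw [hq, rq, rq, rfl1]
    simp [-map_sub, inv_neg]
  have hq3 : ((starRingEnd ℂ) q)⁻¹ = ((‖q‖ ^ 2)⁻¹ : ℝ) • q := by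
    rw [Complex.inv_def, Complex.conj_conj, Complex.normSq_conj, Complex.normSq_eq_norm_sq,
      Complex.real_smul]; ring
  have hn : ‖q‖ ^ 2 ≠ 0 := pow_ne_zero 2 (norm_ne_zero_iff.2 hq0)
  unfold cdot
  rw [d1, d2, rD_det, hq2, hq3]
  simp only [ContinuousLinearMap.comp_apply, rD_apply, map_one, mul_one, Complex.conj_I,
    smul_mul_assoc, map_smul, smul_eq_mul]
  rw [lin_apply (fderiv ℝ u z) q, lin_apply (fderiv ℝ u z) (q * -Complex.I),
    lin_apply (fderiv ℝ ψ (rfl1 c z)) q, lin_apply (fderiv ℝ ψ (rfl1 c z)) (q * -Complex.I)]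
  simp only [Complex.mul_re, Complex.mul_im, Complex.neg_re, Complex.neg_im, Complex.I_re,
    Complex.I_im]
  field_simp
  ring


lemma cdot_congr {u v ψ χ : ℂ → ℝ} {z : ℂ} (h1 : u =ᶠ[nhds z] v) (h2 : ψ =ᶠ[nhds z] χ) :
    cdot u ψ z = cdot v χ z := by
  unfold cdot; rw [h1.fderiv_eq, h2.fderiv_eq]

lemma fold_int {u ψ : ℂ → ℝ} {K L : NNReal} (hu : LipschitzWith K u) (c : ℂ)
    (hψd : Differentiable ℝ ψ) (hψ : LipschitzWith L ψ) (hc : HasCompactSupport ψ) :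
    ∫ z, cdot (fun w => u (fold1 c w)) ψ z =
      (∫ z in Metric.ball c 1, cdot u ψ z) +
      ∫ z in Metric.ball c 1, cdot u (fun w => ψ (rfl1 c w)) z := by
  have hlip : LipschitzWith (K * 1) (fun w => u (fold1 c w)) := hu.comp (fold1_lip c)
  have hInteg := cdot_integrable' hlip hψ hc
  rw [← integral_add_compl (measurableSet_ball (x := c) (ε := 1)) hInteg]
  congr 1
  · refine setIntegral_congr_fun measurableSet_ball fun z hz => ?_
    refine cdot_congr ?_ (Filter.EventuallyEq.refl _ _)
    filter_upwards [Metric.isOpen_ball.mem_nhds hz] with w hw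
    have : ‖w - c‖ ≤ 1 := by rw [← dist_eq_norm]; exact (Metric.mem_ball.1 hw).le
    simp [fold1, this]
  · have himg : rfl1 c '' (Metric.ball c 1 \ {c}) = {z | 1 < ‖z - c‖} := by
      ext w; constructor
      · rintro ⟨z, ⟨hz, hzc⟩, rfl⟩
        have h0 : 0 < ‖z - c‖ := norm_pos_iff.2 (sub_ne_zero.2 hzc)
        have h1 : ‖z - c‖ < 1 := by rw [← dist_eq_norm]; exact hz
        simp only [mem_ofPred_eq, rfl1_norm]
        exact (one_lt_inv₀ h0).2 h1
      · intro hw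
        simp only [mem_ofPred_eq] at hw
        refine ⟨rfl1 c w, ⟨?_, ?_⟩, rfl1_rfl1 c w⟩
        · rw [Metric.mem_ball, dist_eq_norm, rfl1_norm]; exact inv_lt_one_of_one_lt₀ hw
        · intro h
          have := rfl1_norm c w
          rw [mem_singleton_iff.1 h] at this
          rw [sub_self, norm_zero, eq_comm, inv_eq_zero] at this
          linarith
    have hae : (Metric.ball c 1)ᶜ =ᵐ[volume] rfl1 c '' (Metric.ball c 1 \ {c}) := by
      rw [himg]
      have hn : volume (Metric.sphere c 1) = 0 := Measure.addHaar_sphere _ _ _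
      filter_upwards [measure_eq_zero_iff_ae_notMem.1 hn] with z hz
      apply propext
      change ¬ (dist z c < 1) ↔ 1 < ‖z - c‖
      have hz' : dist z c ≠ 1 := hz
      rw [← dist_eq_norm]
      exact ⟨fun h => lt_of_le_of_ne (not_lt.1 h) hz'.symm, fun h => not_lt.2 h.le⟩
    have hae2 : (Metric.ball c 1 \ {c} : Set ℂ) =ᵐ[volume] Metric.ball c 1 :=
      sdiff_null_ae_eq_self (measure_singleton c)
    refine (setIntegral_congr_set hae).trans ?_
    rw [
      integral_image_eq_integral_abs_det_fderiv_smul volume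
        (measurableSet_ball.diff (measurableSet_singleton c)) (f' := fun z => rD (rq c z))
        (fun z hz => (rfl1_hasFDerivAt c hz.2).hasFDerivWithinAt)
        (fun z _ w _ h => by rw [← rfl1_rfl1 c z, h, rfl1_rfl1]),
      ← setIntegral_congr_set (f := cdot u (fun w => ψ (rfl1 c w))) hae2]
    refine setIntegral_congr_ae (measurableSet_ball.diff (measurableSet_singleton c)) ?_
    filter_upwards [hu.ae_differentiableAt (μ := volume)] with z hdz hz
    rw [smul_eq_mul, ← cdot_conf hz.2 hdz (hψd _)]
    congr 1
    refine cdot_congr ?_ (Filter.EventuallyEq.refl _ _)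
    have ho : IsOpen {z : ℂ | 1 < ‖z - c‖} := isOpen_lt continuous_const (by fun_prop)
    have hm : rfl1 c z ∈ {z : ℂ | 1 < ‖z - c‖} := himg ▸ mem_image_of_mem _ hz
    filter_upwards [ho.mem_nhds hm] with w hw
    have : ¬ ‖w - c‖ ≤ 1 := not_le.2 hw
    simp [fold1, this]

lemma refl_sym {u ψ : ℂ → ℝ} {K L : NNReal} (hu : LipschitzWith K u) {a : ℂ → ℝ}
    (ham : Measurable a) {A : ℝ} (ha : ∀ z, |a z| ≤ A) {U : Set ℂ} (hU : IsOpen U)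
    (hw : ∀ ψ : ℂ → ℝ, ContDiff ℝ (⊤ : ℕ∞) ψ → HasCompactSupport ψ → tsupport ψ ⊆ U →
      ∫ z, a z * cdot u ψ z = 0) {c : ℂ} {κ : ℝ} (hκ : κ ≠ 0)
    (haκ : ∀ z ∈ Metric.ball c 1, a z = κ) (hcU : Metric.closedBall c 1 ⊆ U)
    (hψd : Differentiable ℝ ψ) (hψ : LipschitzWith L ψ) (hc : HasCompactSupport ψ) :
    ∫ z in Metric.ball c 1, cdot u (fun w => ψ (rfl1 c w)) z
      = ∫ z in Metric.ball c 1, cdot u ψ z := by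
  obtain ⟨r, hr1, hr⟩ : ∃ r : ℝ, 1 < r ∧ tsupport ψ ⊆ Metric.ball c r := by
    obtain ⟨r, hr⟩ := hc.isCompact.isBounded.subset_ball c
    exact ⟨max r 2, by simp, hr.trans (Metric.ball_subset_ball (le_max_left _ _))⟩
  have hr0 : 0 < r := by linarith
  have hs0 : 0 < r⁻¹ := inv_pos.2 hr0
  have hs1 : r⁻¹ < 1 := inv_lt_one_of_one_lt₀ hr1
  obtain ⟨N, hN⟩ : ∃ N : NNReal, (N : ℝ) = r ^ 2 := ⟨⟨r ^ 2, by positivity⟩, rfl⟩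
  set V : Set ℂ := {z | r⁻¹ < ‖z - c‖} with hV
  set ψR : ℂ → ℝ := V.indicator (fun w => ψ (rfl1 c w)) with hψR
  have hzero : ∀ z, z ≠ c → ‖z - c‖ ≤ r⁻¹ → ψ (rfl1 c z) = 0 := by
    intro z hz hzs
    apply image_eq_zero_of_notMem_tsupport
    intro h
    have h1 := hr h
    rw [Metric.mem_ball, dist_eq_norm, rfl1_norm] at h1
    have h0 : 0 < ‖z - c‖ := norm_pos_iff.2 (sub_ne_zero.2 hz)
    have h2 := inv_anti₀ h0 hzs
    rw [inv_inv] at h2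
    linarith
  have hnc : ∀ z : ℂ, r⁻¹ ≤ ‖z - c‖ → z ≠ c := by
    rintro z hz rfl
    simp at hz; linarith
  have hclV : closure V ⊆ {z | r⁻¹ ≤ ‖z - c‖} := closure_lt_subset_le continuous_const (by fun_prop)
  have hRlip : LipschitzWith (L * N) ψR := by
    refine lip_glue ?_ ?_
    · refine LipschitzOnWith.of_dist_le_mul fun z hz w hw => ?_
      have h1 := hclV hz
      have h2 := hclV hw
      refine (hψ.dist_le_mul _ _).trans ?_
      rw [rfl1_dist c (hnc z h1) (hnc w h2), NNReal.coe_mul, hN, mul_assoc]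
      refine mul_le_mul_of_nonneg_left ?_ L.2
      simp only [mem_ofPred_eq] at h1 h2
      have h3 : r⁻¹ * r⁻¹ ≤ ‖z - c‖ * ‖w - c‖ := mul_le_mul h1 h2 hs0.le (norm_nonneg _)
      have h4 : 0 < r⁻¹ * r⁻¹ := by positivity
      calc dist z w / (‖z - c‖ * ‖w - c‖) ≤ dist z w / (r⁻¹ * r⁻¹) :=
            div_le_div_of_nonneg_left dist_nonneg h4 h3
        _ = r ^ 2 * dist z w := by field_simp
    · intro z hz
      have h := frontier_lt_subset_eq continuous_const (by fun_prop) hz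
      have h' : r⁻¹ = ‖z - c‖ := h
      exact hzero z (hnc z h'.le) h'.ge
  have hReq : ∀ z, z ≠ c → ψR z = ψ (rfl1 c z) := by
    intro z hz
    by_cases h : z ∈ V
    · simp [hψR, h]
    · rw [hψR, indicator_of_notMem h, hzero z hz (not_lt.1 h)]
  set T : ℂ → ℝ := (Metric.ball c 1).indicator (ψR - ψ) with hT
  have hTlip : LipschitzWith (L * N + L) T := by
    refine lip_glue ((hRlip.sub hψ).lipschitzOnWith) ?_
    intro z hz
    rw [frontier_ball c one_ne_zero, mem_sphere_iff_norm] at hz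
    rw [Pi.sub_apply, hReq z (hnc z (by rw [hz]; exact hs1.le)), rfl1_fix c hz, sub_self]
  have hTs : tsupport T ⊆ Metric.closedBall c 1 :=
    closure_minimal ((support_indicator_subset).trans Metric.ball_subset_closedBall) Metric.isClosed_closedBall
  have hTc : HasCompactSupport T :=
    HasCompactSupport.of_support_subset_isCompact (isCompact_closedBall c 1)
      ((subset_tsupport _).trans hTs)
  have h0 := weak_lip hu ham ha hU hw hTlip hTc (hTs.trans hcU)
  have hn : volume (Metric.sphere c 1) = 0 := Measure.addHaar_sphere _ _ _
  have h1 : ∫ z, a z * cdot u T z =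
      ∫ z in Metric.ball c 1, κ * (cdot u (fun w => ψ (rfl1 c w)) z - cdot u ψ z) := by
    rw [← integral_indicator measurableSet_ball]
    refine integral_congr_ae ?_
    filter_upwards [measure_eq_zero_iff_ae_notMem.1 hn,
      measure_eq_zero_iff_ae_notMem.1 (measure_singleton (μ := (volume : Measure ℂ)) c),
      hRlip.ae_differentiableAt (μ := volume)] with z hz1 hz2 hz3
    by_cases hz : z ∈ Metric.ball c 1
    · rw [indicator_of_mem hz, haκ z hz]
      congr 1
      have e1 : T =ᶠ[nhds z] (ψR - ψ) := by
        filter_upwards [Metric.isOpen_ball.mem_nhds hz] with w hw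
        rw [hT, indicator_of_mem hw]
      have e2 : (fun w => ψ (rfl1 c w)) =ᶠ[nhds z] ψR := by
        filter_upwards [isOpen_ne.mem_nhds hz2] with w hw
        exact (hReq w hw).symm
      rw [cdot_congr (Filter.EventuallyEq.refl _ u) e1, cdot_congr (Filter.EventuallyEq.refl _ u) e2]
      unfold cdot
      rw [fderiv_sub hz3 (hψd z)]
      simp only [sub_apply]
      ring
    · rw [indicator_of_notMem hz, cdot_zero_right (fderiv_zero_off _), mul_zero]
      intro h
      have h1 := hTs h
      have h2 : dist z c ≤ 1 := h1
      have h3 : ¬ dist z c < 1 := hz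
      exact hz1 (le_antisymm h2 (not_lt.1 h3))
  have hiψ : IntegrableOn (cdot u ψ) (Metric.ball c 1) := (cdot_integrable' hu hψ hc).integrableOn
  have hiR : IntegrableOn (cdot u (fun w => ψ (rfl1 c w))) (Metric.ball c 1) := by
    have : IntegrableOn (cdot u ψR) (Metric.ball c 1) := by
      refine Integrable.mono' (g := fun _ => 2 * (K * (L * N : NNReal)))
        (integrableOn_const (measure_ball_lt_top (μ := volume) (x := c) (r := 1)).ne) (cdot_measurable _ _).aestronglyMeasurable ?_
      exact Filter.Eventually.of_forall fun z => cdot_abs_le hu hRlip z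
    refine this.congr ?_
    refine ae_restrict_of_ae ?_
    filter_upwards [measure_eq_zero_iff_ae_notMem.1
      (measure_singleton (μ := (volume : Measure ℂ)) c)] with z hz
    refine cdot_congr (Filter.EventuallyEq.refl _ u) ?_
    filter_upwards [isOpen_ne.mem_nhds hz] with w hw
    exact hReq w hw
  rw [h1, integral_const_mul, integral_sub hiR hiψ] at h0
  rcases mul_eq_zero.1 h0 with h | h
  · exact absurd h hκ
  · linarith


open Classical in
/-- Conductivity with two unit disks. -/
noncomputable def aC (c1 c2 : ℂ) (k1 k2 : ℝ) (z : ℂ) : ℝ :=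
  if z ∈ Metric.ball c1 1 then k1 else if z ∈ Metric.ball c2 1 then k2 else 1

lemma aC_meas (c1 c2 : ℂ) (k1 k2 : ℝ) : Measurable (aC c1 c2 k1 k2) :=
  Measurable.ite measurableSet_ball measurable_const
    (Measurable.ite measurableSet_ball measurable_const measurable_const)

lemma aC_bdd {c1 c2 : ℂ} {k1 k2 : ℝ} (z : ℂ) : |aC c1 c2 k1 k2 z| ≤ |k1| + |k2| + 1 := by
  unfold aC; split_ifs
  · linarith [abs_nonneg k2]
  · linarith [abs_nonneg k1]
  · rw [abs_one]; linarith [abs_nonneg k2, abs_nonneg k1]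

lemma aC_pos {c1 c2 : ℂ} {k1 k2 : ℝ} (h1 : 0 < k1) (h2 : 0 < k2) (z : ℂ) :
    0 < aC c1 c2 k1 k2 z := by
  unfold aC; split_ifs <;> first | assumption | norm_num

lemma balls_disj {c1 c2 : ℂ} (hd : 2 < dist c1 c2) {z : ℂ} (h1 : ‖z - c1‖ ≤ 1) :
    1 < ‖z - c2‖ := by
  have := dist_triangle_left c1 c2 z
  rw [dist_eq_norm z c1, dist_eq_norm z c2] at this
  linarith

lemma aC_ball1 {c1 c2 : ℂ} {k1 k2 : ℝ} {z : ℂ} (h : z ∈ Metric.ball c1 1) :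
    aC c1 c2 k1 k2 z = k1 := by simp only [aC, h, if_true]

lemma aC_ball2 {c1 c2 : ℂ} (hd : 2 < dist c1 c2) {k1 k2 : ℝ} {z : ℂ} (h : z ∈ Metric.ball c2 1) :
    aC c1 c2 k1 k2 z = k2 := by
  have h1 : z ∉ Metric.ball c1 1 := by
    intro h1
    have := balls_disj hd (z := z) (by rw [← dist_eq_norm]; exact (Metric.mem_ball.1 h1).le)
    rw [Metric.mem_ball, dist_eq_norm] at h
    linarith
  simp only [aC, h1, h, if_true, if_false]

lemma aC_out {c1 c2 : ℂ} {k1 k2 : ℝ} {z : ℂ} (h1 : z ∉ Metric.ball c1 1)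
    (h2 : z ∉ Metric.ball c2 1) : aC c1 c2 k1 k2 z = 1 := by
  simp only [aC, h1, h2, if_false]

/-- The combination of `u` with its folded copies. -/
noncomputable def hC (c1 c2 : ℂ) (k1 k2 : ℝ) (u : ℂ → ℝ) (z : ℂ) : ℝ :=
  u z + ((k1 - 1) / 2 * u (fold1 c1 z) + (k2 - 1) / 2 * u (fold1 c2 z))

lemma int3 {f g h : ℂ → ℝ} (hf : Integrable f) (hg : Integrable g) (hh : Integrable h) (α β : ℝ) :
    (∫ z, f z) + (α * (∫ z, g z) + β * (∫ z, h z)) = ∫ z, (f z + (α * g z + β * h z)) := by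
  have h1 : Integrable fun z => α * g z + β * h z := (hg.const_mul α).add (hh.const_mul β)
  rw [integral_add hf h1, integral_add (hg.const_mul α) (hh.const_mul β), integral_const_mul,
    integral_const_mul]

lemma hC_harm {u : ℂ → ℝ} {K : NNReal} (hu : LipschitzWith K u) {c1 c2 : ℂ} (hd : 2 < dist c1 c2)
    {k1 k2 : ℝ} (hk1 : 0 < k1) (hk2 : 0 < k2) {U : Set ℂ} (hU : IsOpen U)
    (h1U : Metric.closedBall c1 1 ⊆ U) (h2U : Metric.closedBall c2 1 ⊆ U)
    (hw : ∀ ψ : ℂ → ℝ, ContDiff ℝ (⊤ : ℕ∞) ψ → HasCompactSupport ψ → tsupport ψ ⊆ U →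
      ∫ z, aC c1 c2 k1 k2 z * cdot u ψ z = 0) : HarmonicOnNhd (hC c1 c2 k1 k2 u) U := by
  have L1 : LipschitzWith (K * 1) (fun w => u (fold1 c1 w)) := hu.comp (fold1_lip c1)
  have L2 : LipschitzWith (K * 1) (fun w => u (fold1 c2 w)) := hu.comp (fold1_lip c2)
  obtain ⟨K', hh⟩ : ∃ K', LipschitzWith K' (hC c1 c2 k1 k2 u) := by
    have L1' := (lipschitzWith_smul (α := ℝ) (β := ℝ) ((k1 - 1) / 2)).comp L1
    have L2' := (lipschitzWith_smul (α := ℝ) (β := ℝ) ((k2 - 1) / 2)).comp L2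
    exact ⟨_, hu.add (L1'.add L2')⟩
  refine weyl hh hU fun ψ hψ hc hs => ?_
  have hψd : Differentiable ℝ ψ := hψ.differentiable (by simp)
  obtain ⟨L, hL⟩ : ∃ L, LipschitzWith L ψ :=
    ContDiff.lipschitzWith_of_hasCompactSupport hc (hψ.of_le (by exact_mod_cast le_top)) (n := 1) (by simp)
  have i0 := cdot_integrable' hu hL hc
  have i1 := cdot_integrable' L1 hL hc
  have i2 := cdot_integrable' L2 hL hc
  have e0 : ∫ z, cdot (hC c1 c2 k1 k2 u) ψ z = (∫ z, cdot u ψ z) +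
      ((k1 - 1) / 2 * (∫ z, cdot (fun w => u (fold1 c1 w)) ψ z) +
       (k2 - 1) / 2 * (∫ z, cdot (fun w => u (fold1 c2 w)) ψ z)) := by
    rw [int3 i0 i1 i2]
    refine integral_congr_ae ?_
    filter_upwards [hu.ae_differentiableAt (μ := volume), L1.ae_differentiableAt (μ := volume),
      L2.ae_differentiableAt (μ := volume)] with z d0 d1 d2
    have := (d0.hasFDerivAt.add ((d1.hasFDerivAt.const_mul ((k1 - 1) / 2)).add
      (d2.hasFDerivAt.const_mul ((k2 - 1) / 2)))).fderiv
    have e : fderiv ℝ (hC c1 c2 k1 k2 u) z = _ := this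
    unfold cdot
    rw [e]
    simp only [add_apply, smul_apply, smul_eq_mul, Pi.add_apply]
    ring
  have r1 := refl_sym hu (aC_meas c1 c2 k1 k2) aC_bdd hU hw hk1.ne'
    (fun z hz => aC_ball1 hz) h1U hψd hL hc
  have r2 := refl_sym hu (aC_meas c1 c2 k1 k2) aC_bdd hU hw hk2.ne'
    (fun z hz => aC_ball2 hd hz) h2U hψd hL hc
  rw [e0, fold_int hu c1 hψd hL hc, fold_int hu c2 hψd hL hc, r1, r2, ← hw ψ hψ hc hs]
  have j1 := i0.indicator (measurableSet_ball (x := c1) (ε := 1))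
  have j2 := i0.indicator (measurableSet_ball (x := c2) (ε := 1))
  have e1 : ∫ z, aC c1 c2 k1 k2 z * cdot u ψ z = (∫ z, cdot u ψ z) +
      ((k1 - 1) * (∫ z in Metric.ball c1 1, cdot u ψ z) +
       (k2 - 1) * (∫ z in Metric.ball c2 1, cdot u ψ z)) := by
    rw [← integral_indicator measurableSet_ball, ← integral_indicator measurableSet_ball,
      int3 i0 j1 j2]
    refine integral_congr_ae (Filter.Eventually.of_forall fun z => ?_)
    by_cases h1 : z ∈ Metric.ball c1 1
    · have h2 : z ∉ Metric.ball c2 1 := by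
        have := balls_disj hd (z := z) (by rw [← dist_eq_norm]; exact (Metric.mem_ball.1 h1).le)
        rw [Metric.mem_ball, dist_eq_norm]; linarith
      simp only [aC_ball1 h1, Pi.add_apply, indicator_of_mem h1, indicator_of_notMem h2]; ring
    · by_cases h2 : z ∈ Metric.ball c2 1
      · simp only [aC_ball2 hd h2, Pi.add_apply, indicator_of_mem h2, indicator_of_notMem h1]; ring
      · simp only [aC_out h1 h2, Pi.add_apply, indicator_of_notMem h2, indicator_of_notMem h1]; ring
  rw [e1]; ring

lemma u_harm {u : ℂ → ℝ} {K : NNReal} (hu : LipschitzWith K u) {a : ℂ → ℝ} {U V : Set ℂ}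
    (hw : ∀ ψ : ℂ → ℝ, ContDiff ℝ (⊤ : ℕ∞) ψ → HasCompactSupport ψ → tsupport ψ ⊆ U →
      ∫ z, a z * cdot u ψ z = 0) (hV : IsOpen V) (hVU : V ⊆ U) {k : ℝ} (hk : k ≠ 0)
    (ha : ∀ z ∈ V, a z = k) : HarmonicOnNhd u V := by
  refine weyl hu hV fun ψ hψ hc hs => ?_
  have h := hw ψ hψ hc (hs.trans hVU)
  have : ∫ z, a z * cdot u ψ z = k * ∫ z, cdot u ψ z := by
    rw [← integral_const_mul]
    congr 1; ext z
    by_cases hz : z ∈ tsupport ψ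
    · rw [ha z (hs hz)]
    · rw [cdot_zero_right (fderiv_zero_off hz)]; simp
  rw [this] at h
  exact (mul_eq_zero.1 h).resolve_left hk

lemma fold_in (u : ℂ → ℝ) {c z : ℂ} (h : ‖z - c‖ < 1) :
    (fun w => u (fold1 c w)) =ᶠ[nhds z] u := by
  have ho : IsOpen {z : ℂ | ‖z - c‖ < 1} := isOpen_lt (by fun_prop) continuous_const
  filter_upwards [ho.mem_nhds h] with w hw
  have : ‖w - c‖ ≤ 1 := le_of_lt hw
  simp [fold1, this]

lemma fold_out {u : ℂ → ℝ} {c z : ℂ} (h : 1 < ‖z - c‖) (hu : DifferentiableAt ℝ u (rfl1 c z)) :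
    DifferentiableAt ℝ (fun w => u (fold1 c w)) z ∧
      ‖fderiv ℝ (fun w => u (fold1 c w)) z‖ ≤ ‖fderiv ℝ u (rfl1 c z)‖ := by
  have ho : IsOpen {z : ℂ | 1 < ‖z - c‖} := isOpen_lt continuous_const (by fun_prop)
  have he : (fun w => u (fold1 c w)) =ᶠ[nhds z] (fun w => u (rfl1 c w)) := by
    filter_upwards [ho.mem_nhds h] with w hw
    have : ¬ ‖w - c‖ ≤ 1 := not_le.2 hw
    simp [fold1, this]
  have hz : z ≠ c := by rintro rfl; simp at h; linarith
  have hd := (hu.hasFDerivAt.comp z (rfl1_hasFDerivAt c hz)).congr_of_eventuallyEq he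
  refine ⟨hd.differentiableAt, ?_⟩
  rw [hd.fderiv]
  refine (ContinuousLinearMap.opNorm_comp_le _ _).trans ?_
  refine mul_le_of_le_one_right (norm_nonneg _) ?_
  refine ContinuousLinearMap.opNorm_le_bound _ zero_le_one fun v => ?_
  rw [rD_apply, norm_mul, RCLike.norm_conj, rq, norm_neg, norm_inv, norm_pow, RCLike.norm_conj]
  refine mul_le_mul_of_nonneg_right ?_ (norm_nonneg _)
  exact inv_le_one_of_one_le₀ (one_le_pow₀ h.le)

lemma interior_est {k1 k2 : ℝ} (hk1 : 0 < k1) (hk2 : 0 < k2) : ∃ Q > 0, ∀ (c1 c2 : ℂ),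
    2 < dist c1 c2 → ∀ (u : ℂ → ℝ) (K : NNReal), LipschitzWith K u → ∀ U : Set ℂ, IsOpen U →
    Metric.closedBall c1 1 ⊆ U → Metric.closedBall c2 1 ⊆ U →
    (∀ ψ : ℂ → ℝ, ContDiff ℝ (⊤ : ℕ∞) ψ → HasCompactSupport ψ → tsupport ψ ⊆ U →
      ∫ z, aC c1 c2 k1 k2 z * cdot u ψ z = 0) → ∀ N : ℝ, 
    (∀ z ∈ Metric.ball c1 1 ∪ Metric.ball c2 1, ‖fderiv ℝ (hC c1 c2 k1 k2 u) z‖ ≤ N) →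
    ∀ z ∈ U, ‖z - c1‖ ≠ 1 → ‖z - c2‖ ≠ 1 → ‖fderiv ℝ (hC c1 c2 k1 k2 u) z‖ ≤ N →
    ‖fderiv ℝ u z‖ ≤ Q * N := by
  set m1 := (k1 + 1) / 2 with hm1
  set m2 := (k2 + 1) / 2 with hm2
  set b1 := |(k1 - 1) / 2| with hb1
  set b2 := |(k2 - 1) / 2| with hb2
  have b1n : 0 ≤ b1 := abs_nonneg _
  have b2n : 0 ≤ b2 := abs_nonneg _
  have hbm1 : b1 < m1 := by rw [hb1, abs_lt]; constructor <;> linarith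
  have hbm2 : b2 < m2 := by rw [hb2, abs_lt]; constructor <;> linarith
  have hD : 0 < m1 * m2 - b1 * b2 := by nlinarith
  set Q1 := (m2 + b2) / (m1 * m2 - b1 * b2) with hQ1
  set Q2 := (m1 + b1) / (m1 * m2 - b1 * b2) with hQ2
  have Q1p : 0 < Q1 := div_pos (by linarith) hD
  have Q2p : 0 < Q2 := div_pos (by linarith) hD
  have hb1Q : 0 ≤ b1 * Q1 := by positivity
  have hb2Q : 0 ≤ b2 * Q2 := by positivity
  refine ⟨1 + b1 * Q1 + b2 * Q2 + Q1 + Q2, by positivity, ?_⟩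
  intro c1 c2 hd u K hu U hU h1U h2U hw N hN
  have hd' : 2 < dist c2 c1 := by rwa [dist_comm]
  have N0 : 0 ≤ N := (norm_nonneg _).trans (hN c1 (Or.inl (by simp)))
  have H1 : HarmonicOnNhd u (Metric.ball c1 1) := u_harm hu hw Metric.isOpen_ball
    (Metric.ball_subset_closedBall.trans h1U) hk1.ne' fun z hz => aC_ball1 hz
  have H2 : HarmonicOnNhd u (Metric.ball c2 1) := u_harm hu hw Metric.isOpen_ball
    (Metric.ball_subset_closedBall.trans h2U) hk2.ne' fun z hz => aC_ball2 hd hz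
  have D1 : ∀ z, ‖z - c1‖ < 1 → DifferentiableAt ℝ u z := fun z hz =>
    (H1 z (by rwa [Metric.mem_ball, dist_eq_norm])).1.differentiableAt (by simp)
  have D2 : ∀ z, ‖z - c2‖ < 1 → DifferentiableAt ℝ u z := fun z hz =>
    (H2 z (by rwa [Metric.mem_ball, dist_eq_norm])).1.differentiableAt (by simp)
  have R : ∀ c z : ℂ, 1 < ‖z - c‖ → ‖rfl1 c z - c‖ < 1 := fun c z h => by
    rw [rfl1_norm]; exact inv_lt_one_of_one_lt₀ h
  have hF : ∀ z, ‖fderiv ℝ u z‖ ≤ K := fun z => norm_fderiv_le_of_lipschitz ℝ hu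
  -- suprema
  set P1 := sSup ((fun z => ‖fderiv ℝ u z‖) '' {z | ‖z - c1‖ < 1}) with hP1
  set P2 := sSup ((fun z => ‖fderiv ℝ u z‖) '' {z | ‖z - c2‖ < 1}) with hP2
  have le1 : ∀ z, ‖z - c1‖ < 1 → ‖fderiv ℝ u z‖ ≤ P1 := fun z hz =>
    le_csSup ⟨K, by rintro _ ⟨w, -, rfl⟩; exact hF w⟩ ⟨z, hz, rfl⟩
  have le2 : ∀ z, ‖z - c2‖ < 1 → ‖fderiv ℝ u z‖ ≤ P2 := fun z hz =>
    le_csSup ⟨K, by rintro _ ⟨w, -, rfl⟩; exact hF w⟩ ⟨z, hz, rfl⟩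
  have hle1 : ∀ B, (∀ z, ‖z - c1‖ < 1 → ‖fderiv ℝ u z‖ ≤ B) → P1 ≤ B := fun B hB =>
    csSup_le ⟨_, c1, by simp, rfl⟩ (by rintro _ ⟨w, hw, rfl⟩; exact hB w hw)
  have hle2 : ∀ B, (∀ z, ‖z - c2‖ < 1 → ‖fderiv ℝ u z‖ ≤ B) → P2 ≤ B := fun B hB =>
    csSup_le ⟨_, c2, by simp, rfl⟩ (by rintro _ ⟨w, hw, rfl⟩; exact hB w hw)
  have P1n : 0 ≤ P1 := (norm_nonneg _).trans (le1 c1 (by simp))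
  have P2n : 0 ≤ P2 := (norm_nonneg _).trans (le2 c2 (by simp))
  have m1p : 0 < m1 := by linarith
  have m2p : 0 < m2 := by linarith
  have E1 : ∀ z, ‖z - c1‖ < 1 → m1 * ‖fderiv ℝ u z‖ ≤ N + b2 * P2 := by
    intro z hz
    have hz2 := balls_disj hd hz.le
    obtain ⟨d2, n2⟩ := fold_out hz2 (D2 _ (R _ _ hz2))
    have d1 := (D1 z hz).congr_of_eventuallyEq (fold_in u hz)
    have e := ((D1 z hz).hasFDerivAt.add ((d1.hasFDerivAt.const_mul ((k1 - 1) / 2)).add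
      (d2.hasFDerivAt.const_mul ((k2 - 1) / 2)))).fderiv
    rw [(fold_in u hz).fderiv_eq] at e
    have e' : fderiv ℝ (hC c1 c2 k1 k2 u) z = _ := e
    have e2 : m1 • fderiv ℝ u z = fderiv ℝ (hC c1 c2 k1 k2 u) z -
        ((k2 - 1) / 2) • fderiv ℝ (fun w => u (fold1 c2 w)) z := by
      rw [e', hm1]; module
    have := norm_sub_le (fderiv ℝ (hC c1 c2 k1 k2 u) z)
      (((k2 - 1) / 2) • fderiv ℝ (fun w => u (fold1 c2 w)) z)
    rw [← e2, norm_smul, norm_smul, Real.norm_of_nonneg m1p.le, Real.norm_eq_abs, ← hb2] at this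
    have h3 := mul_le_mul_of_nonneg_left (n2.trans (le2 _ (R _ _ hz2))) b2n
    have h4 := hN z (Or.inl (by rwa [Metric.mem_ball, dist_eq_norm]))
    linarith
  have E2 : ∀ z, ‖z - c2‖ < 1 → m2 * ‖fderiv ℝ u z‖ ≤ N + b1 * P1 := by
    intro z hz
    have hz2 := balls_disj hd' hz.le
    obtain ⟨d2, n2⟩ := fold_out hz2 (D1 _ (R _ _ hz2))
    have d1 := (D2 z hz).congr_of_eventuallyEq (fold_in u hz)
    have e := ((D2 z hz).hasFDerivAt.add ((d2.hasFDerivAt.const_mul ((k1 - 1) / 2)).add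
      (d1.hasFDerivAt.const_mul ((k2 - 1) / 2)))).fderiv
    rw [(fold_in u hz).fderiv_eq] at e
    have e' : fderiv ℝ (hC c1 c2 k1 k2 u) z = _ := e
    have e2 : m2 • fderiv ℝ u z = fderiv ℝ (hC c1 c2 k1 k2 u) z -
        ((k1 - 1) / 2) • fderiv ℝ (fun w => u (fold1 c1 w)) z := by
      rw [e', hm2]; module
    have := norm_sub_le (fderiv ℝ (hC c1 c2 k1 k2 u) z)
      (((k1 - 1) / 2) • fderiv ℝ (fun w => u (fold1 c1 w)) z)
    rw [← e2, norm_smul, norm_smul, Real.norm_of_nonneg m2p.le, Real.norm_eq_abs, ← hb1] at this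
    have h3 := mul_le_mul_of_nonneg_left (n2.trans (le1 _ (R _ _ hz2))) b1n
    have h4 := hN z (Or.inr (by rwa [Metric.mem_ball, dist_eq_norm]))
    linarith
  have F1 : m1 * P1 ≤ N + b2 * P2 := by
    have := hle1 ((N + b2 * P2) / m1) fun z hz => by
      rw [le_div_iff₀ m1p, mul_comm]; exact E1 z hz
    rw [le_div_iff₀ m1p] at this; linarith
  have F2 : m2 * P2 ≤ N + b1 * P1 := by
    have := hle2 ((N + b1 * P1) / m2) fun z hz => by
      rw [le_div_iff₀ m2p, mul_comm]; exact E2 z hz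
    rw [le_div_iff₀ m2p] at this; linarith
  have G1 : P1 ≤ Q1 * N := by
    rw [hQ1, div_mul_eq_mul_div, le_div_iff₀ hD]
    nlinarith [mul_le_mul_of_nonneg_left F1 m2p.le, mul_le_mul_of_nonneg_left F2 b2n]
  have G2 : P2 ≤ Q2 * N := by
    rw [hQ2, div_mul_eq_mul_div, le_div_iff₀ hD]
    nlinarith [mul_le_mul_of_nonneg_left F2 m1p.le, mul_le_mul_of_nonneg_left F1 b1n]
  have T1 : 0 ≤ b1 * Q1 * N := by positivity
  have T2 : 0 ≤ b2 * Q2 * N := by positivity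
  have T3 : 0 ≤ Q1 * N := by positivity
  have T4 : 0 ≤ Q2 * N := by positivity
  intro z hzU hz1 hz2 hzN
  rcases lt_or_gt_of_ne hz1 with h1 | h1
  · have := le1 z h1; linarith
  rcases lt_or_gt_of_ne hz2 with h2 | h2
  · have := le2 z h2; linarith
  obtain ⟨d1, n1⟩ := fold_out h1 (D1 _ (R _ _ h1))
  obtain ⟨d2, n2⟩ := fold_out h2 (D2 _ (R _ _ h2))
  have d0 : DifferentiableAt ℝ u z := by
    have ho : IsOpen (U ∩ ({z | 1 < ‖z - c1‖} ∩ {z | 1 < ‖z - c2‖})) :=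
      hU.inter ((isOpen_lt continuous_const (by fun_prop)).inter
        (isOpen_lt continuous_const (by fun_prop)))
    have := u_harm hu hw ho inter_subset_left one_ne_zero (fun w hw => aC_out
      (by rw [Metric.mem_ball, dist_eq_norm]; exact not_lt.2 (le_of_lt hw.2.1))
      (by rw [Metric.mem_ball, dist_eq_norm]; exact not_lt.2 (le_of_lt hw.2.2)))
    exact (this z ⟨hzU, h1, h2⟩).1.differentiableAt (by simp)
  have e := (d0.hasFDerivAt.add ((d1.hasFDerivAt.const_mul ((k1 - 1) / 2)).add
      (d2.hasFDerivAt.const_mul ((k2 - 1) / 2)))).fderiv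
  have e' : fderiv ℝ (hC c1 c2 k1 k2 u) z = _ := e
  set A1 := fderiv ℝ (fun w => u (fold1 c1 w)) z
  set A2 := fderiv ℝ (fun w => u (fold1 c2 w)) z
  have e2 : fderiv ℝ u z = fderiv ℝ (hC c1 c2 k1 k2 u) z - ((k1 - 1) / 2) • A1
      - ((k2 - 1) / 2) • A2 := by
    rw [e']; module
  have h5 := norm_sub_le (fderiv ℝ (hC c1 c2 k1 k2 u) z - ((k1 - 1) / 2) • A1) (((k2 - 1) / 2) • A2)
  have h6 := norm_sub_le (fderiv ℝ (hC c1 c2 k1 k2 u) z) (((k1 - 1) / 2) • A1)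
  rw [← e2, norm_smul ((k2 - 1) / 2), Real.norm_eq_abs, ← hb2] at h5
  rw [norm_smul ((k1 - 1) / 2), Real.norm_eq_abs, ← hb1] at h6
  have h7 := mul_le_mul_of_nonneg_left (n1.trans ((le1 _ (R _ _ h1)).trans G1)) b1n
  have h8 := mul_le_mul_of_nonneg_left (n2.trans ((le2 _ (R _ _ h2)).trans G2)) b2n
  nlinarith


lemma second_min {w w' : ℝ → ℝ} {w'' : ℝ} (h1 : ∀ᶠ t in nhds 0, HasDerivAt w (w' t) t)
    (h2 : HasDerivAt w' w'' 0) (hm : IsLocalMin w 0) : 0 ≤ w'' := by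
  by_contra hneg
  push Not at hneg
  have e1 : deriv w =ᶠ[nhds 0] w' := h1.mono fun t ht => ht.deriv
  have e2 : deriv (deriv w) 0 = w'' := by rw [e1.deriv_eq, h2.deriv]
  have hM := isLocalMax_of_deriv_deriv_neg (f := w) (by rw [e2]; exact hneg) hm.deriv_eq_zero
    h1.self_of_nhds.continuousAt
  have hconst : w =ᶠ[nhds 0] fun _ => w 0 := by
    filter_upwards [hm, hM] with t a b using le_antisymm b a
  have e3 : deriv w =ᶠ[nhds 0] fun _ => 0 := by
    have := hconst.deriv
    simpa using this
  have : deriv (deriv w) 0 = 0 := by rw [e3.deriv_eq]; simp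
  linarith

/-- second directional derivative -/
noncomputable def D2 (v : ℂ) (w : ℂ → ℝ) (z : ℂ) : ℝ := fderiv ℝ (fun y => fderiv ℝ w y v) z v

lemma line_d {w : ℂ → ℝ} {z : ℂ} (hw : ContDiffAt ℝ 2 w z) (v : ℂ) :
    (∀ᶠ t : ℝ in nhds 0, HasDerivAt (fun t : ℝ => w (z + t • v)) (fderiv ℝ w (z + t • v) v) t) ∧
    HasDerivAt (fun t : ℝ => fderiv ℝ w (z + t • v) v) (D2 v w z) 0 := by
  have hl : ∀ t : ℝ, HasDerivAt (fun t : ℝ => z + t • v) v t := fun t => by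
    simpa using ((hasDerivAt_id t).smul_const v).const_add z
  have hl0 : Filter.Tendsto (fun t : ℝ => z + t • v) (nhds 0) (nhds z) := by
    have := (hl 0).continuousAt.tendsto
    simpa using this
  constructor
  · have hev : ∀ᶠ y in nhds z, ContDiffAt ℝ 2 w y := hw.eventually (by simp)
    filter_upwards [hl0.eventually hev] with t ht
    exact (ht.differentiableAt (by simp)).hasFDerivAt.comp_hasDerivAt t (hl t)
  · have hd : DifferentiableAt ℝ (fun y => fderiv ℝ w y v) z :=
      ((hw.fderiv_right (m := 1) (by norm_num)).differentiableAt (by simp)).clm_apply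
        (differentiableAt_const v)
    have hd' : HasFDerivAt (fun y => fderiv ℝ w y v) (fderiv ℝ (fun y => fderiv ℝ w y v) z)
        (z + (0:ℝ) • v) := by simpa using hd.hasFDerivAt
    exact hd'.comp_hasDerivAt (0:ℝ) (hl 0)

lemma d2_cont {f : ℂ → ℝ} (hf : ContDiff ℝ (⊤ : ℕ∞) f) (v : ℂ) : Continuous (D2 v f) := by
  have h1 : ContDiff ℝ (⊤ : ℕ∞) (fun y => fderiv ℝ f y v) :=
    (hf.fderiv_right (by simp)).clm_apply contDiff_const
  exact (h1.continuous_fderiv (by simp)).clm_apply continuous_const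

lemma d2_neg (f : ℂ → ℝ) (v z : ℂ) : D2 v (-f) z = - D2 v f z := by
  unfold D2
  have : (fun y => fderiv ℝ (-f) y v) = -(fun y => fderiv ℝ f y v) := by
    ext y; simp [fderiv_neg]
  rw [this, fderiv_neg]; simp

lemma barrier_min {f φ u : ℂ → ℝ} {z : ℂ} {A B : ℝ} (hf : ContDiffAt ℝ 2 f z)
    (hφ : ContDiffAt ℝ 2 φ z) (hu : ContDiffAt ℝ 2 u z) (v : ℂ)
    (hm : IsLocalMin (fun y => φ y + A * (-f y - B * (f y * f y)) - u y) z) :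
    0 ≤ D2 v φ z + A * (-D2 v f z - B * (2 * (fderiv ℝ f z v * fderiv ℝ f z v) + 2 * (f z * D2 v f z)))
      - D2 v u z := by
  obtain ⟨f1, f2⟩ := line_d hf v
  obtain ⟨p1, p2⟩ := line_d hφ v
  obtain ⟨u1, u2⟩ := line_d hu v
  have hl0 : ContinuousAt (fun t : ℝ => z + t • v) 0 := by fun_prop
  have hz0 : z + (0:ℝ) • v = z := by simp
  have hm' : IsLocalMin (fun t : ℝ => φ (z + t • v) + A * (-f (z + t • v) -
      B * (f (z + t • v) * f (z + t • v))) - u (z + t • v)) 0 := by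
    have : IsLocalMin (fun y => φ y + A * (-f y - B * (f y * f y)) - u y) (z + (0:ℝ) • v) := by
      rwa [hz0]
    exact hl0.tendsto.eventually this
  refine second_min (w' := fun t : ℝ => fderiv ℝ φ (z + t • v) v + A * (-fderiv ℝ f (z + t • v) v -
      B * (fderiv ℝ f (z + t • v) v * f (z + t • v) + f (z + t • v) * fderiv ℝ f (z + t • v) v)) -
      fderiv ℝ u (z + t • v) v) ?_ ?_ hm'
  · filter_upwards [f1, p1, u1] with t a b c
    exact (b.add ((a.neg.sub ((a.mul a).const_mul B)).const_mul A)).sub c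
  · have f0 := f1.self_of_nhds
    have := (p2.add ((f2.neg.sub (((f2.mul f0).add (f0.mul f2)).const_mul B)).const_mul A)).sub u2
    refine this.congr_deriv ?_
    simp only [hz0]
    ring

lemma cpt_bd {K : Set ℂ} (hK : IsCompact K) {g : ℂ → ℝ} (hg : Continuous g) :
    ∃ D, 0 ≤ D ∧ ∀ z ∈ K, |g z| ≤ D := by
  obtain ⟨D, hD⟩ := hK.exists_bound_of_continuousOn hg.continuousOn
  exact ⟨max D 0, le_max_right _ _, fun z hz => (hD z hz).trans (le_max_left _ _)⟩

lemma two_le_smooth : (2 : WithTop ℕ∞) ≤ ((⊤ : ℕ∞) : WithTop ℕ∞) := by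
  have : ((2 : ℕ∞) : WithTop ℕ∞) ≤ ((⊤ : ℕ∞) : WithTop ℕ∞) := WithTop.coe_le_coe.2 le_top
  exact this

lemma collar {Ω : Set ℂ} (hb : Bornology.IsBounded Ω) {f : ℂ → ℝ}
    (hf : ContDiff ℝ (⊤ : ℕ∞) f) (hΩ : Ω = {z | f z < 0})
    (hne : ∀ z ∈ frontier Ω, fderiv ℝ f z ≠ 0) {φ : ℂ → ℝ} (hφ : ContDiff ℝ (⊤ : ℕ∞) φ)
    {ρ : ℝ} (hρ : 0 < ρ) {M : ℝ} (hM : 0 ≤ M) :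
    ∃ ε > 0, ∃ A, 0 ≤ A ∧ ∀ u : ℂ → ℝ, ContinuousOn u (closure Ω) → EqOn u φ (frontier Ω) →
      (∀ z ∈ Ω, |u z| ≤ M) →
      HarmonicOnNhd u {z ∈ Ω | Metric.infDist z (frontier Ω) < ρ} →
      ∀ z ∈ Ω, -ε ≤ f z → |u z - φ z| ≤ A * |f z| := by
  have hfc : Continuous f := hf.continuous
  have hcomp : IsCompact (closure Ω) := hb.isCompact_closure
  have hΓc : IsCompact (frontier Ω) := hcomp.of_isClosed_subset isClosed_frontier frontier_subset_closure
  have hΩo : IsOpen Ω := by rw [hΩ]; exact isOpen_lt hfc continuous_const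
  have hcl : ∀ z ∈ closure Ω, f z ≤ 0 := by
    intro z hz
    rw [hΩ] at hz
    exact closure_lt_subset_le hfc continuous_const hz
  have hfr : ∀ z ∈ closure Ω, f z = 0 → z ∈ frontier Ω := by
    intro z hz h0
    rw [hΩo.frontier_eq]
    refine ⟨hz, ?_⟩
    rw [hΩ]; simp [h0]
  have hfv : ∀ v : ℂ, Continuous (fun z => fderiv ℝ f z v) := fun v =>
    (hf.continuous_fderiv (by simp)).clm_apply continuous_const
  set F : ℂ → ℝ := fun z => fderiv ℝ f z 1 * fderiv ℝ f z 1
    + fderiv ℝ f z Complex.I * fderiv ℝ f z Complex.I with hF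
  have hFc : Continuous F := ((hfv 1).mul (hfv 1)).add ((hfv Complex.I).mul (hfv Complex.I))
  have hFpos : ∀ z ∈ frontier Ω, 0 < F z := by
    intro z hz
    by_contra h
    have h1 : fderiv ℝ f z 1 = 0 := by
      simp only [hF] at h
      nlinarith [mul_self_nonneg (fderiv ℝ f z 1), mul_self_nonneg (fderiv ℝ f z Complex.I)]
    have h2 : fderiv ℝ f z Complex.I = 0 := by
      simp only [hF] at h
      nlinarith [mul_self_nonneg (fderiv ℝ f z 1), mul_self_nonneg (fderiv ℝ f z Complex.I)]
    apply hne z hz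
    ext v
    rw [lin_apply, h1, h2]; simp
  obtain ⟨c0, hc0, hFc0⟩ := hΓc.exists_forall_le' hFc.continuousOn hFpos
  set c := c0 / 2 with hc
  have hcp : 0 < c := by linarith
  set O : Set ℂ := {z | c < F z} ∩ {z | Metric.infDist z (frontier Ω) < ρ} with hO
  have hOo : IsOpen O := (isOpen_lt continuous_const hFc).inter
    (isOpen_lt (Metric.continuous_infDist_pt _) continuous_const)
  have hΓO : frontier Ω ⊆ O := fun z hz =>
    ⟨show c < F z by linarith [hFc0 z hz], by
      show Metric.infDist z (frontier Ω) < ρ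
      rw [Metric.infDist_zero_of_mem hz]; exact hρ⟩
  obtain ⟨e1, he1, hfe1⟩ := (hcomp.diff hOo).exists_forall_le' (f := fun z => - f z) (a := 0)
    hfc.neg.continuousOn (by
      rintro z ⟨hz, hzO⟩
      rcases lt_or_eq_of_le (hcl z hz) with h | h
      · linarith
      · exact absurd (hΓO (hfr z hz h)) hzO)
  obtain ⟨D, hD0, hD⟩ := cpt_bd hcomp ((d2_cont hf 1).add (d2_cont hf Complex.I))
  obtain ⟨Dφ, hDφ0, hDφ⟩ := cpt_bd hcomp ((d2_cont hφ 1).add (d2_cont hφ Complex.I))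
  obtain ⟨M', hM'0, hM'⟩ := cpt_bd hcomp hφ.continuous
  set B := (D + 1) / c with hB
  have hBp : 0 < B := by positivity
  have hBc : B * c = D + 1 := by rw [hB]; field_simp
  set ε := min (e1 / 2) (min (1 / (2 * B)) (c / (2 * (D + 1)))) with hε
  have hεp : 0 < ε := by positivity
  have hε1 : ε < e1 := lt_of_le_of_lt (min_le_left _ _) (by linarith)
  have hε2 : ε * B ≤ 1 / 2 := by
    have : ε ≤ 1 / (2 * B) := (min_le_right _ _).trans (min_le_left _ _)
    rw [le_div_iff₀ (by positivity)] at this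
    linarith
  have hε3 : 2 * ε * (D + 1) ≤ c := by
    have : ε ≤ c / (2 * (D + 1)) := (min_le_right _ _).trans (min_le_right _ _)
    rw [le_div_iff₀ (by positivity)] at this
    linarith
  set A := max (Dφ + 1) (2 * (M + M') / ε) with hA
  have hA1 : Dφ + 1 ≤ A := le_max_left _ _
  have hA2 : M + M' ≤ A * (ε / 2) := by
    have : 2 * (M + M') / ε ≤ A := le_max_right _ _
    rw [div_le_iff₀ hεp] at this; linarith
  have hA0 : 0 ≤ A := by linarith
  have hinO : ∀ z ∈ closure Ω, -ε ≤ f z → z ∈ O := by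
    intro z hz hfz
    by_contra h
    have := hfe1 z ⟨hz, h⟩
    linarith
  refine ⟨ε, hεp, A, hA0, ?_⟩
  -- one sided estimate
  have key : ∀ φ u : ℂ → ℝ, ContDiff ℝ (⊤ : ℕ∞) φ →
      (∀ z ∈ closure Ω, |D2 1 φ z + D2 Complex.I φ z| ≤ Dφ) → (∀ z ∈ closure Ω, |φ z| ≤ M') →
      ContinuousOn u (closure Ω) → EqOn u φ (frontier Ω) → (∀ z ∈ Ω, |u z| ≤ M) →
      HarmonicOnNhd u {z ∈ Ω | Metric.infDist z (frontier Ω) < ρ} →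
      ∀ z ∈ Ω, -ε ≤ f z → u z - φ z ≤ A * |f z| := by
    intro φ u hφ hDφ hM' huc huφ huM huh z hz hfz
    set w : ℂ → ℝ := fun y => φ y + A * (-f y - B * (f y * f y)) - u y with hw
    set S : Set ℂ := closure Ω ∩ {z | -ε ≤ f z} with hS
    have hSc : IsCompact S := hcomp.inter_right (isClosed_le continuous_const hfc)
    have hwc : ContinuousOn w S := by
      refine ContinuousOn.sub ?_ (huc.mono inter_subset_left)
      have := hφ.continuous
      exact Continuous.continuousOn (by fun_prop)
    obtain ⟨z0, hz0, hmin⟩ := hSc.exists_isMinOn ⟨z, subset_closure hz, hfz⟩ hwc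
    have hw0 : 0 ≤ w z0 := by
      have hz0' := hz0.2
      rcases eq_or_lt_of_le (hcl z0 hz0.1) with h0 | h0
      · simp only [hw, h0, huφ (hfr z0 hz0.1 h0)]; simp
      have hz0Ω : z0 ∈ Ω := by rw [hΩ]; exact h0
      rcases eq_or_lt_of_le (show -ε ≤ f z0 from hz0.2) with h1 | h1
      · have a1 := (abs_le.1 (hM' z0 hz0.1)).1
        have a2 := (abs_le.1 (huM z0 hz0Ω)).2
        have a3 : A * (ε / 2) ≤ A * (-f z0 - B * (f z0 * f z0)) := by
          refine mul_le_mul_of_nonneg_left ?_ hA0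
          rw [← h1]; nlinarith
        simp only [hw]; linarith
      · exfalso
        have hloc : IsLocalMin w z0 := by
          have ho : IsOpen (Ω ∩ {z | -ε < f z}) := hΩo.inter (isOpen_lt continuous_const hfc)
          filter_upwards [ho.mem_nhds ⟨hz0Ω, h1⟩] with y hy
          exact hmin ⟨subset_closure hy.1, show -ε ≤ f y from le_of_lt hy.2⟩
        have hO0 := hinO z0 hz0.1 hz0'
        have hh := huh z0 ⟨hz0Ω, hO0.2⟩
        have q1 := barrier_min (hf.contDiffAt.of_le two_le_smooth)
          (hφ.contDiffAt.of_le two_le_smooth) hh.1 1 hloc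
        have q2 := barrier_min (hf.contDiffAt.of_le two_le_smooth)
          (hφ.contDiffAt.of_le two_le_smooth) hh.1 Complex.I hloc
        have q3 : D2 1 u z0 + D2 Complex.I u z0 = 0 := by
          have := contDiffAt_two_laplacian hh.1
          rw [hh.2.self_of_nhds] at this
          exact this.symm
        have hFz : c < F z0 := hO0.1
        have b1 := (abs_le.1 (hDφ z0 hz0.1)).2
        have b2 := abs_le.1 (hD z0 hz0.1)
        simp only [Pi.add_apply] at b2
        set Δ := D2 1 f z0 + D2 Complex.I f z0 with hΔ
        have q4 : 0 ≤ (D2 1 φ z0 + D2 Complex.I φ z0) + A * (-Δ - B * (2 * F z0 + 2 * (f z0 * Δ))) := by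
          have := add_nonneg q1 q2
          have e : (D2 1 φ z0 + D2 Complex.I φ z0) + A * (-Δ - B * (2 * F z0 + 2 * (f z0 * Δ))) =
            (D2 1 φ z0 + D2 Complex.I φ z0) + A * (-Δ - B * (2 * F z0 + 2 * (f z0 * Δ)))
             - (D2 1 u z0 + D2 Complex.I u z0) := by rw [q3]; ring
          rw [e]
          simp only [hΔ, hF]
          linarith
        have q5 : -(c / 2) ≤ f z0 * Δ := by nlinarith
        have q6 : -Δ - B * (2 * F z0 + 2 * (f z0 * Δ)) ≤ -1 := by
          have : c ≤ 2 * F z0 + 2 * (f z0 * Δ) := by linarith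
          nlinarith
        nlinarith
    have hwz : w z0 ≤ w z := hmin ⟨subset_closure hz, hfz⟩
    have h3 : 0 ≤ w z := hw0.trans hwz
    have hfneg : f z ≤ 0 := hcl z (subset_closure hz)
    rw [abs_of_nonpos hfneg]
    have : A * (-f z - B * (f z * f z)) ≤ A * (-f z) :=
      mul_le_mul_of_nonneg_left (by nlinarith [mul_self_nonneg (f z)]) hA0
    simp only [hw] at h3
    linarith
  intro u huc huφ huM huh z hz hfz
  rw [abs_le]
  constructor
  · have := key (-φ) (-u) hφ.neg (fun z hz => by
        rw [d2_neg, d2_neg, ← neg_add, abs_neg]; exact hDφ z hz)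
      (fun z hz => by rw [Pi.neg_apply, abs_neg]; exact hM' z hz) huc.neg
      (fun z hz => by simp [huφ hz]) (fun z hz => by rw [Pi.neg_apply, abs_neg]; exact huM z hz)
      (fun z hz => by
        have := (huh z hz).const_smul (c := (-1:ℝ))
        simpa using this) z hz hfz
    simp only [Pi.neg_apply] at this
    linarith
  · exact key φ u hφ hDφ hM' huc huφ huM huh z hz hfz


lemma loc_lip {f : ℂ → ℝ} (hf : ContDiff ℝ (⊤ : ℕ∞) f) (R : ℝ) :
    ∃ L : NNReal, LipschitzOnWith L f (Metric.closedBall 0 R) := by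
  obtain ⟨D, hD⟩ := (isCompact_closedBall (0:ℂ) R).exists_bound_of_continuousOn
    (hf.continuous_fderiv (by simp)).continuousOn
  refine ⟨D.toNNReal, Convex.lipschitzOnWith_of_nnnorm_fderiv_le
    (fun x _ => hf.differentiable (by simp) x) (fun x hx => ?_) (convex_closedBall _ _)⟩
  rw [← NNReal.coe_le_coe, coe_nnnorm]; exact (hD x hx).trans (Real.le_coe_toNNReal D)

lemma fold1_mem {Ω : Set ℂ} {c z : ℂ} (hc : Metric.closedBall c 1 ⊆ Ω) (hz : z ∈ Ω) :
    fold1 c z ∈ Ω := by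
  unfold fold1
  split_ifs with h
  · exact hz
  · apply hc
    rw [Metric.mem_closedBall, dist_eq_norm, rfl1_norm]
    exact inv_le_one_of_one_le₀ (not_le.1 h).le

lemma ball_sub_dom {Ω : Set ℂ} {z : ℂ} {r : ℝ} (hz : z ∈ Ω) (hr : r ≤ Metric.infDist z (frontier Ω)) :
    Metric.ball z r ⊆ Ω := by
  intro p hp
  by_contra hpΩ
  have hr0 : 0 < r := dist_nonneg.trans_lt hp
  obtain ⟨q, hq1, hq2⟩ := seg_frontier (convex_ball z r).isPreconnected
    (Metric.mem_ball_self hr0) hz hp hpΩ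
  have h1 := Metric.infDist_le_dist_of_mem (x := z) hq2
  rw [Metric.mem_ball, dist_comm] at hq1
  linarith

theorem core {Ω : Set ℂ} (hb : Bornology.IsBounded Ω) {f : ℂ → ℝ}
    (hf : ContDiff ℝ (⊤ : ℕ∞) f) (hΩ : Ω = {z | f z < 0})
    (hne : ∀ z ∈ frontier Ω, fderiv ℝ f z ≠ 0) {φ : ℂ → ℝ} (hφ : ContDiff ℝ (⊤ : ℕ∞) φ)
    {μ k1 k2 : ℝ} (hμ : 0 < μ) (hk1 : 0 < k1) (hk2 : 0 < k2) :
    ∃ C > 0, ∀ c1 c2 : ℂ, 2 < dist c1 c2 →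
      (∀ z ∈ Metric.closedBall c1 1 ∪ Metric.closedBall c2 1,
        z ∈ Ω ∧ 2 * μ ≤ Metric.infDist z (frontier Ω)) →
      ∀ (u : ℂ → ℝ) (K : NNReal), LipschitzWith K u → EqOn u φ (frontier Ω) →
      (∀ ψ : ℂ → ℝ, ContDiff ℝ (⊤ : ℕ∞) ψ → HasCompactSupport ψ → tsupport ψ ⊆ Ω →
        ∫ z, aC c1 c2 k1 k2 z * cdot u ψ z = 0) →
      ∀ z ∈ Ω, ‖z - c1‖ ≠ 1 → ‖z - c2‖ ≠ 1 → ‖fderiv ℝ u z‖ ≤ C := by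
  have hfc : Continuous f := hf.continuous
  have hcomp : IsCompact (closure Ω) := hb.isCompact_closure
  have hΓc : IsCompact (frontier Ω) := hcomp.of_isClosed_subset isClosed_frontier frontier_subset_closure
  have hΩo : IsOpen Ω := by rw [hΩ]; exact isOpen_lt hfc continuous_const
  obtain ⟨M, hM0, hM⟩ := cpt_bd hΓc hφ.continuous
  obtain ⟨R, hR⟩ := hcomp.isBounded.subset_closedBall 0
  obtain ⟨Lf, hLf⟩ := loc_lip hf R
  obtain ⟨Lφ, hLφ⟩ := loc_lip hφ R
  obtain ⟨ε, hε, A, hA, hcol⟩ := collar hb hf hΩ hne hφ hμ hM0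
  obtain ⟨Q, hQ, hInteg⟩ := interior_est hk1 hk2
  have hfr0 : ∀ z ∈ frontier Ω, f z = 0 := by
    intro z hz
    rw [hΩ] at hz
    exact frontier_lt_subset_eq hfc continuous_const hz
  set η := min μ (ε / (Lf + 1)) with hη
  have hηp : 0 < η := by positivity
  have hη1 : η ≤ μ := min_le_left _ _
  have hη2 : Lf * η ≤ ε := by
    have : η ≤ ε / (Lf + 1) := min_le_right _ _
    rw [le_div_iff₀ (by positivity)] at this
    linarith
  set Mh := M + (|(k1 - 1) / 2| * M + |(k2 - 1) / 2| * M) with hMh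
  have hMh0 : 0 ≤ Mh := by positivity
  set N := 8 * Mh / (η / 2) with hN
  have hN0 : 0 ≤ N := by positivity
  refine ⟨16 * (A * Lf + Lφ) + Q * N + 1, by positivity, ?_⟩
  intro c1 c2 hd hballs u K hu huφ hw z hz hz1 hz2
  have h1U : Metric.closedBall c1 1 ⊆ Ω := fun w hw => (hballs w (Or.inl hw)).1
  have h2U : Metric.closedBall c2 1 ⊆ Ω := fun w hw => (hballs w (Or.inr hw)).1
  have hΓne : (frontier Ω).Nonempty := by
    by_contra h
    rw [not_nonempty_iff_eq_empty] at h
    have := (hballs c1 (Or.inl (by simp))).2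
    rw [h, Metric.infDist_empty] at this
    linarith
  have huM : ∀ w ∈ Ω, |u w| ≤ M := by
    have a1 := max_princ hu (aC_meas c1 c2 k1 k2) aC_bdd (aC_pos hk1 hk2) hΩo hb hw (M := M)
      (fun w hw => by rw [huφ hw]; exact (abs_le.1 (hM w hw)).2)
    have hw' : ∀ ψ : ℂ → ℝ, ContDiff ℝ (⊤ : ℕ∞) ψ → HasCompactSupport ψ → tsupport ψ ⊆ Ω →
        ∫ z, aC c1 c2 k1 k2 z * cdot (-u) ψ z = 0 := by
      intro ψ h1 h2 h3
      have e : (fun z => aC c1 c2 k1 k2 z * cdot (-u) ψ z) =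
          fun z => -(aC c1 c2 k1 k2 z * cdot u ψ z) := by
        ext z
        simp only [cdot, fderiv_neg, neg_apply]; ring
      rw [e, integral_neg, hw ψ h1 h2 h3, neg_zero]
    have a2 := max_princ hu.neg (aC_meas c1 c2 k1 k2) aC_bdd (aC_pos hk1 hk2) hΩo hb hw' (M := M)
      (fun w hw => by
        have := (abs_le.1 (hM w hw)).1
        show -u w ≤ M
        rw [huφ hw]; linarith)
    intro w hw
    have a3 : -u w ≤ M := a2 w hw
    exact abs_le.2 ⟨by linarith, a1 w hw⟩
  have hcolo : IsOpen {z ∈ Ω | Metric.infDist z (frontier Ω) < μ} :=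
    hΩo.inter (isOpen_lt (Metric.continuous_infDist_pt _) continuous_const)
  have huh : HarmonicOnNhd u {z ∈ Ω | Metric.infDist z (frontier Ω) < μ} := by
    refine u_harm hu hw hcolo (fun z hz => hz.1) one_ne_zero fun w hw => aC_out ?_ ?_
    · intro h
      have h1 := (hballs w (Or.inl (Metric.ball_subset_closedBall h))).2
      have h2 : Metric.infDist w (frontier Ω) < μ := hw.2
      linarith
    · intro h
      have h1 := (hballs w (Or.inr (Metric.ball_subset_closedBall h))).2
      have h2 : Metric.infDist w (frontier Ω) < μ := hw.2
      linarith
  have hQN : 0 ≤ Q * N := by positivity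
  have hAL : 0 ≤ A * Lf + Lφ := by positivity
  by_cases hzd : η / 2 ≤ Metric.infDist z (frontier Ω)
  · have hH := hC_harm hu hd hk1 hk2 hΩo h1U h2U hw
    have hHN : ∀ w ∈ Ω, η / 2 ≤ Metric.infDist w (frontier Ω) →
        ‖fderiv ℝ (hC c1 c2 k1 k2 u) w‖ ≤ N := by
      intro w hw hwd
      have hs := ball_sub_dom hw hwd
      refine grad_est (m := 0) (by linarith) hMh0 (fun y hy => hH y (hs hy)) fun y hy => ?_
      have hy' := hs hy
      rw [sub_zero, hC]
      refine (abs_add_le _ _).trans (add_le_add (huM y hy') ((abs_add_le _ _).trans (add_le_add ?_ ?_)))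
      · rw [abs_mul]
        exact mul_le_mul_of_nonneg_left (huM _ (fold1_mem h1U hy')) (abs_nonneg _)
      · rw [abs_mul]
        exact mul_le_mul_of_nonneg_left (huM _ (fold1_mem h2U hy')) (abs_nonneg _)
    have := hInteg c1 c2 hd u K hu Ω hΩo h1U h2U hw N (fun w hw => by
      have h3 := hballs w (hw.imp (fun h => Metric.ball_subset_closedBall h)
        (fun h => Metric.ball_subset_closedBall h))
      exact hHN w h3.1 (by linarith [h3.2])) z hz hz1 hz2 (hHN z hz hzd)
    linarith
  · push Not at hzd
    obtain ⟨x0, hx0, hdx⟩ := hΓc.exists_infDist_eq_dist hΓne z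
    set d := Metric.infDist z (frontier Ω) with hd_def
    have hx0Ω : x0 ∉ Ω := by
      rw [hΩo.frontier_eq] at hx0; exact hx0.2
    have hdp : 0 < d := by
      rw [hdx, dist_pos]; rintro rfl; exact hx0Ω hz
    have hs := ball_sub_dom hz (le_refl (Metric.infDist z (frontier Ω)))
    have hx0R := hR (frontier_subset_closure hx0)
    have hdist : ∀ w ∈ Metric.ball z d, dist w x0 ≤ 2 * d := by
      intro w hw
      have := dist_triangle w z x0
      have h2 := Metric.mem_ball.1 hw
      linarith
    have hdist' : ∀ w ∈ Metric.ball z d, dist w x0 < η := by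
      intro w hw
      have := dist_triangle w z x0
      have h2 := Metric.mem_ball.1 hw
      linarith
    have hg := grad_est (u := u) (c := z) (R := d) (M := (A * Lf + Lφ) * (2 * d)) (m := φ x0) hdp
      (by positivity) (fun w hw => huh w ⟨hs hw, ?_⟩) (fun w hw => ?_)
    · have e : 8 * ((A * Lf + Lφ) * (2 * d)) / d = 16 * (A * Lf + Lφ) := by
        field_simp; ring
      rw [e] at hg
      linarith
    · have h1 := Metric.infDist_le_dist_of_mem (x := w) hx0
      have h2 := hdist' w hw
      show Metric.infDist w (frontier Ω) < μ
      linarith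
    · have hwΩ := hs hw
      have hwR := hR (subset_closure hwΩ)
      have f1 := hLf.dist_le_mul w hwR x0 hx0R
      have p1 := hLφ.dist_le_mul w hwR x0 hx0R
      rw [Real.dist_eq] at f1 p1
      rw [hfr0 x0 hx0, sub_zero] at f1
      have f2 : |f w| ≤ Lf * (2 * d) := f1.trans (mul_le_mul_of_nonneg_left (hdist w hw) Lf.2)
      have p2 : |φ w - φ x0| ≤ Lφ * (2 * d) := p1.trans (mul_le_mul_of_nonneg_left (hdist w hw) Lφ.2)
      have f3 : |f w| ≤ ε := f1.trans ((mul_le_mul_of_nonneg_left (hdist' w hw).le Lf.2).trans hη2)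
      have c1 := hcol u hu.continuous.continuousOn huφ huM huh w hwΩ (by linarith [(abs_le.1 f3).1])
      have c2 := mul_le_mul_of_nonneg_left f2 hA
      have c3 := abs_add_le (u w - φ w) (φ w - φ x0)
      rw [sub_add_sub_cancel] at c3
      nlinarith

/-- The isometry between the complex plane and Euclidean space. -/
noncomputable def eC : ℂ ≃ₗᵢ[ℝ] EuclideanSpace ℝ (Fin 2) := Complex.orthonormalBasisOneI.repr

lemma eC_one : eC 1 = EuclideanSpace.single 0 1 := by
  have := Complex.orthonormalBasisOneI.repr_self 0
  simpa [eC] using this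

lemma eC_I : eC Complex.I = EuclideanSpace.single 1 1 := by
  have := Complex.orthonormalBasisOneI.repr_self 1
  simpa [eC] using this

lemma fderiv_eC (g : EuclideanSpace ℝ (Fin 2) → ℝ) (z : ℂ) :
    fderiv ℝ (fun w => g (eC w)) z =
      (fderiv ℝ g (eC z)).comp (eC.toContinuousLinearEquiv : ℂ →L[ℝ] EuclideanSpace ℝ (Fin 2)) :=
  eC.toContinuousLinearEquiv.comp_right_fderiv (f := g) (x := z)

lemma cdot_eC (g ψ : EuclideanSpace ℝ (Fin 2) → ℝ) (z : ℂ) :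
    cdot (fun w => g (eC w)) (fun w => ψ (eC w)) z = ∑ i, pd i g (eC z) * pd i ψ (eC z) := by
  rw [cdot, fderiv_eC, fderiv_eC, Fin.sum_univ_two]
  simp [pd, eC_one, eC_I]

lemma norm_fderiv_eC (g : EuclideanSpace ℝ (Fin 2) → ℝ) (z : ℂ) :
    ‖fderiv ℝ (fun w => g (eC w)) z‖ = ‖fderiv ℝ g (eC z)‖ := by
  rw [fderiv_eC]
  exact ContinuousLinearMap.opNorm_comp_linearIsometryEquiv (fderiv ℝ g (eC z)) eC

lemma aFun_eC (δ κp κm : ℝ) (z : ℂ) :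
    aFun δ κp κm (eC z) = aC 0 (eC.symm (ctr δ)) κp κm z := by
  have h1 : eC z ∈ Bp ↔ z ∈ Metric.ball 0 1 := by
    simp [Bp]
  have h2 : eC z ∈ Bm δ ↔ z ∈ Metric.ball (eC.symm (ctr δ)) 1 := by
    rw [Bm, Metric.mem_ball, Metric.mem_ball]
    conv_lhs => rw [← eC.apply_symm_apply (ctr δ), eC.dist_map]
  by_cases a : eC z ∈ Bp
  · rw [aFun, if_pos a, aC, if_pos (h1.1 a)]
  · rw [aFun, if_neg a, aC, if_neg (fun h => a (h1.2 h))]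
    by_cases b : eC z ∈ Bm δ
    · rw [if_pos b, if_pos (h2.1 b)]
    · rw [if_neg b, if_neg (fun h => b (h2.2 h))]

lemma infDist_eC (S : Set (EuclideanSpace ℝ (Fin 2))) (z : ℂ) :
    Metric.infDist z (eC ⁻¹' S) = Metric.infDist (eC z) S := by
  rw [← Metric.infDist_image eC.isometry, image_preimage_eq _ eC.surjective]

lemma frontier_eC (S : Set (EuclideanSpace ℝ (Fin 2))) :
    frontier (eC ⁻¹' S) = eC ⁻¹' (frontier S) :=
  (eC.toHomeomorph.preimage_frontier S).symm

lemma ctr_norm {δ : ℝ} (hδ : 0 < δ) : 2 < ‖ctr δ‖ := by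
  have : ‖ctr δ‖ = |-2 - 2 * δ| := by
    rw [EuclideanSpace.norm_eq, Fin.sum_univ_two]
    simp [ctr, Real.sqrt_sq_eq_abs]
  rw [this, abs_of_neg (by linarith)]; linarith


end helpers

/-- Gradient bound on all of `Ω`: there is a constant `C′` depending only on
`Ω, μ, δ₀, κ⁺, κ⁻` and `φ` such that any Lipschitz weak solution `u` of `div(a∇u)=0`
with boundary value `φ` satisfies `ess sup_{Ω} |∇u| ≤ C′`. -/
theorem stmt13 (Ω : Set (EuclideanSpace ℝ (Fin 2)))
    (hΩo : IsOpen Ω) (hΩb : Bornology.IsBounded Ω) (hΩs : SmoothBoundary Ω)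
    (μ δ₀ κp κm : ℝ) (hμ : μ ∈ Ioo (0:ℝ) 1) (hδ₀ : 0 < δ₀)
    (hκp : 0 < κp) (hκm : 0 < κm)
    (φ : EuclideanSpace ℝ (Fin 2) → ℝ) (hφ : ContDiff ℝ (⊤ : ℕ∞) φ) :
    ∃ C' > 0, ∀ δ ∈ Ioo 0 δ₀,
      closure Bp ∪ closure (Bm δ) ⊆ innerReg Ω (2 * μ) →
      ∀ u : EuclideanSpace ℝ (Fin 2) → ℝ,
        (∃ K, LipschitzOnWith K u Ω) →
        ContinuousOn u (closure Ω) →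
        EqOn u φ (frontier Ω) →
        (∀ ψ : EuclideanSpace ℝ (Fin 2) → ℝ, ContDiff ℝ (⊤ : ℕ∞) ψ → HasCompactSupport ψ →
          tsupport ψ ⊆ Ω →
          ∫ x in Ω, aFun δ κp κm x * ∑ i, pd i u x * pd i ψ x = 0) →
        ∀ᵐ x ∂volume, x ∈ Ω → ‖fderiv ℝ u x‖ ≤ C' := by
  obtain ⟨f, hf, hΩf, hne⟩ := hΩs
  have hsm : ContDiff ℝ (⊤ : ℕ∞) (fun z : ℂ => eC z) := eC.contDiff
  have hsm' : ContDiff ℝ (⊤ : ℕ∞) (fun x => eC.symm x) := eC.symm.contDiff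
  obtain ⟨C, hC, hcore⟩ := core (Ω := eC ⁻¹' Ω) (f := fun z => f (eC z)) (φ := fun z => φ (eC z))
    (by
      have : eC ⁻¹' Ω = eC.symm '' Ω := by
        rw [eC.symm.image_eq_preimage_symm]; rfl
      rw [this]
      exact eC.symm.lipschitz.isBounded_image hΩb) (hf.comp hsm)
    (by rw [hΩf]; rfl)
    (by
      intro z hz h0
      rw [frontier_eC] at hz
      apply hne _ hz
      rw [← norm_eq_zero, ← norm_fderiv_eC, h0, norm_zero])
    (hφ.comp hsm) hμ.1 hκp hκm
  refine ⟨C, hC, ?_⟩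
  intro δ hδ hsub u hK huc huφ hw
  obtain ⟨K, hK⟩ := hK
  obtain ⟨g, hg, hgu⟩ := hK.extend_real
  have hgφ : EqOn g φ (frontier Ω) := by
    have : EqOn u g (closure Ω) := hgu.of_subset_closure huc hg.continuous.continuousOn
      subset_closure subset_rfl
    intro x hx
    rw [← this (frontier_subset_closure hx), huφ hx]
  have hfd : ∀ x ∈ Ω, fderiv ℝ u x = fderiv ℝ g x := by
    intro x hx
    refine Filter.EventuallyEq.fderiv_eq ?_
    filter_upwards [hΩo.mem_nhds hx] with y hy using hgu hy
  set c := eC.symm (ctr δ) with hc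
  have hdist : 2 < dist (0:ℂ) c := by
    rw [dist_comm, dist_zero_right, hc, eC.symm.norm_map]; exact ctr_norm hδ.1
  have key := hcore 0 c hdist ?_ (fun z => g (eC z)) (K * 1) (hg.comp eC.lipschitz) ?_ ?_
  · have n1 : volume (Metric.sphere (0 : EuclideanSpace ℝ (Fin 2)) 1) = 0 := Measure.addHaar_sphere _ _ _
    have n2 : volume (Metric.sphere (ctr δ) 1) = 0 := Measure.addHaar_sphere _ _ _
    filter_upwards [measure_eq_zero_iff_ae_notMem.1 n1, measure_eq_zero_iff_ae_notMem.1 n2]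
      with x h1 h2 hx
    have := key (eC.symm x) (by simpa using hx) (by simpa using h1) (by
      rw [hc, ← map_sub, eC.symm.norm_map, ← dist_eq_norm]; exact h2)
    rw [norm_fderiv_eC, eC.apply_symm_apply] at this
    rw [hfd x hx]; exact this
  · intro z hz
    have h : eC z ∈ closure Bp ∪ closure (Bm δ) := by
      rcases hz with h | h
      · left
        rw [Bp, closure_ball _ one_ne_zero]
        simpa using h
      · right
        rw [Bm, closure_ball _ one_ne_zero, Metric.mem_closedBall]
        rw [← eC.apply_symm_apply (ctr δ), eC.dist_map]; exact h
    have h' := hsub h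
    rw [frontier_eC, infDist_eC]
    exact ⟨h'.1, h'.2⟩
  · intro z hz
    rw [frontier_eC] at hz
    exact hgφ hz
  · intro ψ hψ hψc hψs
    have hts : tsupport (fun x => ψ (eC.symm x)) = eC.symm ⁻¹' tsupport ψ :=
      tsupport_comp_eq_preimage ψ eC.symm.toHomeomorph
    have hts' : tsupport (fun x => ψ (eC.symm x)) ⊆ Ω := by
      rw [hts]; intro x hx
      simpa using hψs hx
    have h0 := hw (fun x => ψ (eC.symm x)) (hψ.comp hsm')
      (hψc.comp_homeomorph eC.symm.toHomeomorph) hts'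
    set ψ' := fun x => ψ (eC.symm x) with hψ'
    have e1 : ∀ z, aC 0 c κp κm z * cdot (fun w => g (eC w)) ψ z =
        (fun x => aFun δ κp κm x * ∑ i, pd i g x * pd i ψ' x) (eC z) := by
      intro z
      have : ψ = fun w => ψ' (eC w) := by ext w; simp [hψ']
      rw [this, cdot_eC, hc, ← aFun_eC]
    simp_rw [e1]
    rw [eC.measurePreserving.integral_comp eC.toHomeomorph.measurableEmbedding
      (fun x => aFun δ κp κm x * ∑ i, pd i g x * pd i ψ' x)]
    rw [← h0]
    symm
    have e2 : ∫ x in Ω, aFun δ κp κm x * ∑ i, pd i u x * pd i ψ' x =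
        ∫ x in Ω, aFun δ κp κm x * ∑ i, pd i g x * pd i ψ' x := by
      refine setIntegral_congr_fun hΩo.measurableSet fun x hx => ?_
      simp only [pd, hfd x hx]
    rw [e2]
    refine setIntegral_eq_integral_of_forall_compl_eq_zero fun x hx => ?_
    have hz : fderiv ℝ ψ' x = 0 := by
      by_contra h'
      exact hx (hts' (support_fderiv_subset ℝ h'))
    simp [pd, hz]
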